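/- With pinning ε=(π_i ε)_{i∈V}, all of the following limits as ε↓0 exist and satisfy: 0 < lim_{ε↓0} E_{μ^ε}[O^π_xy] = lim_{ε↓0} E_{μ^{ε_xδ_x}}[O^π_xy · √(π_x e^{t_x}/Σ_{i∈V} π_i e^{t_i}) · Π_{i∈V∖{x}} e^{−½επ_i e^{t_i}}] ≤ lim_{ε↓0} E_{μ^{ε_xδ_x}}[O^π_xy] < ∞. -/

import Mathlib

open MeasureTheory Real Filter
open scoped BigOperators

attribute [local instance] Classical.propDecidable

namespace H22

variable {V : Type*} [Fintype V] [DecidableEq V]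

/-- The augmented graph `Γ_ρ`: add an extra vertex `ρ` (encoded by `none`)
joined to every vertex of the original graph. -/
def aug (G : SimpleGraph V) : SimpleGraph (Option V) :=
  SimpleGraph.fromRel (fun a b =>
    match a, b with
    | some i, some j => G.Adj i j
    | _, _ => True)

/-- `T` is (the edge set of) a spanning tree of `G`. -/
def IsSpanningTree {α : Type*} (G : SimpleGraph α) (T : Finset (Sym2 α)) : Prop :=
  ↑T ⊆ G.edgeSet ∧ (SimpleGraph.fromEdgeSet (↑T : Set (Sym2 α))).IsTree

/-- The finset of all spanning trees of `G`. -/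
noncomputable def STrees {α : Type*} [Fintype α] [DecidableEq α] (G : SimpleGraph α) :
    Finset (Finset (Sym2 α)) :=
  Finset.univ.filter (fun T => IsSpanningTree G T)

/-- Extension of a vector `t : V → ℝ` to `Option V` by `t_ρ := 0`. -/
def extV (t : V → ℝ) : Option V → ℝ := fun a => Option.elim a 0 t

/-- Lift of a (symmetrized) function of two vertices to unordered pairs. -/
noncomputable def esym {α : Type*} (f : α → α → ℝ) : Sym2 α → ℝ :=
  Sym2.lift ⟨fun a b => (f a b + f b a) / 2, fun a b => by ring⟩

/-- Combined edge weights on the augmented graph: `β` on edges of `Γ`,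
`ε_i` on the edge `i ∼ ρ`. -/
def bres (β : V → V → ℝ) (ε : V → ℝ) : Option V → Option V → ℝ := fun a b =>
  match a, b with
  | some i, some j => β i j
  | some i, none => ε i
  | none, some j => ε j
  | none, none => 0

/-- `B_{ij}(t,s) = cosh(t_i - t_j) + ½ (s_i - s_j)² e^{t_i+t_j}` on the augmented graph. -/
noncomputable def Bfun (t s : V → ℝ) (a b : Option V) : ℝ :=
  Real.cosh (extV t a - extV t b) +
    (1 / 2) * (extV s a - extV s b) ^ 2 * Real.exp (extV t a + extV t b)

/-- Weight `β_{ij} e^{t_i+t_j}` of an edge of the augmented graph. -/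
noncomputable def treeW (β : V → V → ℝ) (ε : V → ℝ) (t : V → ℝ) : Sym2 (Option V) → ℝ :=
  esym (fun a b => bres β ε a b * Real.exp (extV t a + extV t b))

/-- Gibbs factor `e^{-β_{ij}(B_{ij}(t,s)-1)}` of an edge of the augmented graph. -/
noncomputable def gibbs (β : V → V → ℝ) (ε : V → ℝ) (t s : V → ℝ) : Sym2 (Option V) → ℝ :=
  esym (fun a b => Real.exp (-(bres β ε a b * (Bfun t s a b - 1))))

/-- The density of the measure `μ^ε` with respect to
(Lebesgue on `ℝ^V × ℝ^V`) × (counting measure on spanning trees). -/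
noncomputable def dens (G : SimpleGraph V) (β : V → V → ℝ) (ε : V → ℝ)
    (t s : V → ℝ) (T : Finset (Sym2 (Option V))) : ℝ :=
  (∏ j, Real.exp (-t j) / (2 * Real.pi)) *
  (∏ e ∈ Finset.univ.filter (fun e : Sym2 (Option V) => e ∈ (aug G).edgeSet),
      gibbs β ε t s e) *
  (∏ e ∈ T, treeW β ε t e)

/-- Expectation of an observable `f(t,s,T)` under the measure `μ^ε`. -/
noncomputable def expect (G : SimpleGraph V) (β : V → V → ℝ) (ε : V → ℝ)
    (f : (V → ℝ) → (V → ℝ) → Finset (Sym2 (Option V)) → ℝ) : ℝ :=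
  ∑ T ∈ STrees (aug G), ∫ p : (V → ℝ) × (V → ℝ), dens G β ε p.1 p.2 T * f p.1 p.2 T

/-- The weighted graph Laplacian `A(t)` of `Γ`. -/
noncomputable def Amat (G : SimpleGraph V) (β : V → V → ℝ) (t : V → ℝ) : Matrix V V ℝ :=
  Matrix.of fun i j =>
    if i = j then ∑ k ∈ Finset.univ.filter (fun k => G.Adj k j), β k j * Real.exp (t k + t j)
    else if G.Adj i j then -(β i j * Real.exp (t i + t j)) else 0

/-- The pinning diagonal matrix `ε̂(t) = diag(ε_i e^{t_i})`. -/
noncomputable def epsHat (ε : V → ℝ) (t : V → ℝ) : Matrix V V ℝ :=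
  Matrix.diagonal fun i => ε i * Real.exp (t i)

/-- The Green's function `G^ε_{xy} = e^{t_x+t_y} (A(t)+ε̂(t))⁻¹_{xy}`. -/
noncomputable def Gfun (G : SimpleGraph V) (β : V → V → ℝ) (ε : V → ℝ)
    (t : V → ℝ) (x y : V) : ℝ :=
  Real.exp (t x + t y) * (Amat G β t + epsHat ε t)⁻¹ x y

/-- The edge `i ∼ ρ` of the augmented graph. -/
def rootEdge (i : V) : Sym2 (Option V) := s(some i, none)

/-- The set of roots `R(T) = {i ∈ V : (i ∼ ρ) ∈ T}`. -/
noncomputable def roots (T : Finset (Sym2 (Option V))) : Finset V :=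
  Finset.univ.filter fun i => rootEdge i ∈ T

/-- The forest `F(T) = T ∩ E`: edges of `T` not incident to `ρ`. -/
noncomputable def forestOf (T : Finset (Sym2 (Option V))) : Finset (Sym2 (Option V)) :=
  T.filter fun e => ¬ ((none : Option V) ∈ e)

/-- `x ↔_T y`: `x` and `y` are connected in `T` through a path not using `ρ`. -/
def connIn (T : Finset (Sym2 (Option V))) (x y : V) : Prop :=
  (SimpleGraph.fromEdgeSet (↑(forestOf T) : Set (Sym2 (Option V)))).Reachable (some x) (some y)

/-- The observable `O^π_{xy}`. -/
noncomputable def obs (pv : V → ℝ) (x y : V) (t : V → ℝ)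
    (T : Finset (Sym2 (Option V))) : ℝ :=
  Real.exp (t x + t y) / (pv x * Real.exp (t x) + pv y * Real.exp (t y)) *
    (if rootEdge x ∈ T ∧ connIn T x y then 1 else 0)

/-- The pinning `ε = (π_i ε)_{i ∈ V}`. -/
def pinOf (pv : V → ℝ) (ε : ℝ) : V → ℝ := fun i => pv i * ε

/-- The pinning `c δ_x` concentrated at the single vertex `x`. -/
def singlePin (x : V) (c : ℝ) : V → ℝ := fun i => if i = x then c else 0

end H22

open scoped Topology

namespace H22

/-!
The `ε → 0` limit becomes visible after recentring. In the integral for a fixed spanning tree `T`,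
substitute `t i = u - log ε + z i` with `z x = 0`, together with `s i = c σ + b r i` with `r x = 0`,
where `b = ε e^{-u}` and `c = κ(z) e^{-u/2}` for a positive function `κ` still to be chosen.
The Gibbs factors and the tree weights of the edges of `Γ` only see differences and scale out,
so that everything combines (`integral_cov`, `newInt_eq`) to an integrand `newInt … ε`
which carries the factor `(ε² e^{-u})^(#R(T) - 1)` and makes sense for `ε = 0`:
there only the trees with the single root `x` survive.

For `ε ∈ [0, 1]` these integrands are dominated by a fixed integrable function (`newInt_bound`):
as `Γ` is connected, the Gibbs factors of `Γ` beat any exponential in `z` and any polynomial in `r`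
(`innerGibbs_decay`), while the pinning at `x` controls `u`, `σ` and the powers of `ε² e^{-u}`.
Dominated convergence then gives all three limits (`tendsto_expect`).

In the limit, with pinning `q`, the factor of the edges to `ρ` is
`exp(-½ e^u S) exp(-½ κ² S σ²)` with `S = ∑ i, q i e^{z i}`. For `q = π` take `κ = S^{-1/2}`, and for
`q = π_x δ_x`, where `S = π_x`, take `κ = π_x^{-1/2}`: the Gaussian in `σ` is then the same in both
cases. The remaining quotient of the two integrands is the square root (quotient of the
two `κ`) times `∏_{i ≠ x} exp(-½ π_i e^{u + z i})` (quotient of the factors in `e^u`), which is the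
limit of the comparison observable. So the first two limits agree integrand by integrand
(`newInt_zero_eq`). The inequality holds as the comparison observable is at most `1`, and
positivity as some spanning tree has `x` as its only root (`exists_tree`).
-/

section

set_option linter.unusedSectionVars false

variable {V : Type*} [Fintype V] [DecidableEq V]

/-! ### Change of variables -/

/-- `zer x t` replaces the coordinate of `t` at `x` by `0`. -/
noncomputable def zer (x : V) (t : V → ℝ) : V → ℝ := fun i => if i = x then 0 else t i

@[simp] lemma zer_self (x : V) (t : V → ℝ) : zer x t x = 0 := by simp [zer]

lemma zer_ne {x i : V} (h : i ≠ x) (t : V → ℝ) : zer x t i = t i := by simp [zer, h]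

lemma continuous_zer (x : V) : Continuous (zer x) := by
  refine continuous_pi fun i => ?_
  by_cases h : i = x
  · subst h; simpa using continuous_const
  · simpa [zer, h] using continuous_apply i

/-- The shear replacing every coordinate `t i`, `i ≠ x`, by `t x + t i`. -/
noncomputable def shear (x : V) (t : V → ℝ) : V → ℝ := fun i => t x + zer x t i

lemma continuous_shear (x : V) : Continuous (shear x) :=
  continuous_pi fun i => (continuous_apply x).add ((continuous_apply i).comp (continuous_zer x))

lemma shear_measurePreserving (x : V) :
    MeasurePreserving (shear x) (volume : Measure (V → ℝ)) volume := by
  refine ⟨(continuous_shear x).measurable, ?_⟩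
  -- the shear is `1 + w eₓᵀ` with `w ⬝ eₓ = 0`
  let w : V → ℝ := fun i => if i = x then 0 else 1
  let e : V → ℝ := fun i => if i = x then 1 else 0
  let M : Matrix V V ℝ := 1 + Matrix.replicateCol Unit w * Matrix.replicateRow Unit e
  have hdet : M.det = 1 := by
    simp only [M]
    rw [Matrix.det_one_add_replicateCol_mul_replicateRow]
    simp only [dotProduct, w, e]
    rw [Finset.sum_eq_zero]
    · norm_num
    · intro i _; by_cases h : i = x <;> simp [h]
  have hM : ∀ t, Matrix.toLin' M t = shear x t := by
    intro t
    ext i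
    have h1 : Matrix.toLin' M t i = t i + w i * t x := by
      have hdot : dotProduct e t = t x := by simp [e, dotProduct]
      simp only [M, Matrix.toLin'_apply]
      rw [Matrix.add_mulVec, Matrix.one_mulVec, ← Matrix.mulVec_mulVec]
      have h2 : (Matrix.replicateRow Unit e).mulVec t = fun _ => t x := by
        ext j; exact hdot
      rw [h2]
      simp [Matrix.mulVec, dotProduct]
    rw [h1]
    by_cases h : i = x
    · subst h; simp [w, shear]
    · simp [w, shear, h, zer_ne h]; ring
  have := Real.map_matrix_volume_pi_eq_smul_volume_pi (M := M) (by rw [hdet]; norm_num)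
  rw [hdet] at this
  have hfun : (⇑(Matrix.toLin' M)) = shear x := funext hM
  rw [hfun] at this
  simpa using this

/-- The linear substitution `s i = c * s x + b * s i` for `i ≠ x`, `s x = c * s x`. -/
noncomputable def scl (x : V) (c b : ℝ) (s : V → ℝ) : V → ℝ := fun i => c * s x + b * zer x s i

/-- `scl` is a diagonal map followed by the shear, whence its Jacobian. -/
lemma lintegral_scl (x : V) {c b : ℝ} (hc : 0 < c) (hb : 0 < b) (F : (V → ℝ) → ENNReal)
    (hF : Measurable F) :
    ∫⁻ s, F s = ENNReal.ofReal (c * b ^ (Fintype.card V - 1)) * ∫⁻ s, F (scl x c b s) := by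
  let d : V → ℝ := fun i => if i = x then c else b
  have hdet : (Matrix.diagonal d).det = c * b ^ (Fintype.card V - 1) := by
    rw [Matrix.det_diagonal, ← Finset.mul_prod_erase _ _ (Finset.mem_univ x)]
    congr 1
    · simp [d]
    · rw [Finset.prod_congr rfl (g := fun _ => b)]
      · simp [Finset.card_erase_of_mem]
      · intro i hi
        simp [d, Finset.ne_of_mem_erase hi]
  have hpos : 0 < c * b ^ (Fintype.card V - 1) := by positivity
  have h := Real.smul_map_diagonal_volume_pi (D := d) (by rw [hdet]; exact hpos.ne')
  rw [hdet, abs_of_pos hpos] at h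
  rw [← (shear_measurePreserving x).lintegral_comp hF]
  conv_lhs => rw [← h]
  rw [lintegral_smul_measure, lintegral_map (f := fun s => F (shear x s))
    (hF.comp (continuous_shear x).measurable)
    (by exact (LinearMap.continuous_of_finiteDimensional _).measurable)]
  simp only [smul_eq_mul]
  congr 1
  refine lintegral_congr fun s => ?_
  congr 1
  ext i
  simp only [shear, scl, Matrix.toLin'_apply, Matrix.mulVec_diagonal]
  by_cases hi : i = x
  · subst hi; simp [d]
  · simp [zer_ne hi, d, hi, Matrix.mulVec_diagonal]

/-- Change of variables `t ↦ shear t + a`, followed by a linear change of the `s` variables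
whose coefficients depend on `t`. -/
lemma integral_cov (x : V) (a : ℝ) {c b : (V → ℝ) → ℝ} (hc : Measurable c) (hb : Measurable b)
    (hc0 : ∀ t, 0 < c t) (hb0 : ∀ t, 0 < b t) (F : (V → ℝ) × (V → ℝ) → ℝ) (hF : Measurable F) :
    ∫ p, F p = ∫ p : (V → ℝ) × (V → ℝ), c p.1 * b p.1 ^ (Fintype.card V - 1) *
      F (fun i => shear x p.1 i + a, scl x (c p.1) (b p.1) p.2) := by
  set Ψ : (V → ℝ) × (V → ℝ) → (V → ℝ) × (V → ℝ) :=
    fun p => (fun i => shear x p.1 i + a, scl x (c p.1) (b p.1) p.2) with hΨ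
  have hzm : ∀ i, Measurable fun p : (V → ℝ) × (V → ℝ) => zer x p.2 i := fun i =>
    ((continuous_apply i).comp ((continuous_zer x).comp continuous_snd)).measurable
  have hsh : Measurable fun t : V → ℝ => fun i => shear x t i + a :=
    measurable_pi_lambda _ fun i =>
      (((continuous_apply i).comp (continuous_shear x)).measurable).add_const _
  have hscl : Measurable fun p : (V → ℝ) × (V → ℝ) => scl x (c p.1) (b p.1) p.2 := by
    refine measurable_pi_lambda _ fun i => ?_
    exact ((hc.comp measurable_fst).mul ((measurable_pi_apply x).comp measurable_snd)).add
      ((hb.comp measurable_fst).mul (hzm i))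
  have hΨm : Measurable Ψ := (hsh.comp measurable_fst).prodMk hscl
  have hJm : Measurable fun p : (V → ℝ) × (V → ℝ) =>
      Real.toNNReal (c p.1 * b p.1 ^ (Fintype.card V - 1)) :=
    (((hc.comp measurable_fst).mul ((hb.comp measurable_fst).pow_const _))).real_toNNReal
  have hmap : Measure.map Ψ ((volume : Measure ((V → ℝ) × (V → ℝ))).withDensity
      fun p => (Real.toNNReal (c p.1 * b p.1 ^ (Fintype.card V - 1)) : ENNReal)) = volume := by
    refine Measure.ext_of_lintegral _ fun f hf => ?_
    have hg : Measurable ((fun p : (V → ℝ) × (V → ℝ) =>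
        (Real.toNNReal (c p.1 * b p.1 ^ (Fintype.card V - 1)) : ENNReal)) *
          fun p => f (Ψ p)) := hJm.coe_nnreal_ennreal.mul (hf.comp hΨm)
    rw [lintegral_map hf hΨm, lintegral_withDensity_eq_lintegral_mul _ hJm.coe_nnreal_ennreal
      (g := fun p => f (Ψ p)) (hf.comp hΨm), Measure.volume_eq_prod, lintegral_prod _ hf.aemeasurable,
      lintegral_prod _ hg.aemeasurable]
    have hmp : MeasurePreserving (fun t : V → ℝ => fun i => shear x t i + a) volume volume :=
      (measurePreserving_add_right (volume : Measure (V → ℝ)) (fun _ => a)).comp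
        (shear_measurePreserving x)
    rw [← hmp.lintegral_comp hf.lintegral_prod_right']
    refine lintegral_congr fun t => ?_
    rw [lintegral_scl x (hc0 t) (hb0 t) (fun s => f (fun i => shear x t i + a, s))
      (hf.comp measurable_prodMk_left),
      ← lintegral_const_mul' _ _ ENNReal.ofReal_ne_top]
    rfl
  conv_lhs => rw [← hmap]
  rw [integral_map hΨm.aemeasurable hF.aestronglyMeasurable,
    integral_withDensity_eq_integral_smul hJm]
  refine integral_congr_ae (ae_of_all _ fun p => ?_)
  have : 0 ≤ c p.1 * b p.1 ^ (Fintype.card V - 1) := by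
    have := hc0 p.1; have := hb0 p.1; positivity
  simp only [NNReal.smul_def, Real.coe_toNNReal _ this, smul_eq_mul, hΨ]


/-! ### Spanning trees of the augmented graph -/

/-- The edge set of the augmented graph, as a finset. -/
noncomputable def augE (G : SimpleGraph V) : Finset (Sym2 (Option V)) :=
  Finset.univ.filter (fun e : Sym2 (Option V) => e ∈ (aug G).edgeSet)

lemma aug_adj_some {G : SimpleGraph V} {i j : V} : (aug G).Adj (some i) (some j) ↔ G.Adj i j := by
  simp only [aug, SimpleGraph.fromRel_adj]
  constructor
  · rintro ⟨_, h | h⟩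
    · exact h
    · exact h.symm
  · intro h
    exact ⟨by simpa using h.ne, Or.inl h⟩

lemma rootEdge_mem_aug (G : SimpleGraph V) (i : V) : rootEdge i ∈ (aug G).edgeSet := by
  simp [rootEdge, aug]

lemma rootEdge_injective : Function.Injective (rootEdge : V → Sym2 (Option V)) := by
  intro i j h
  simpa [rootEdge] using h

lemma filter_none_eq {G : SimpleGraph V} {S : Finset (Sym2 (Option V))}
    (hS : ∀ e ∈ S, e ∈ (aug G).edgeSet) :
    S.filter (fun e => (none : Option V) ∈ e) = (roots S).image rootEdge := by
  ext e
  simp only [Finset.mem_filter, Finset.mem_image, roots, Finset.mem_univ, true_and]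
  constructor
  · rintro ⟨he, hn⟩
    obtain ⟨a, rfl⟩ := Sym2.mem_iff_exists.1 hn
    have hadj := hS _ he
    cases a with
    | none => exact absurd hadj (by simp)
    | some i => exact ⟨i, by rwa [rootEdge, Sym2.eq_swap], by rw [rootEdge, Sym2.eq_swap]⟩
  · rintro ⟨i, hi, rfl⟩
    exact ⟨hi, by simp [rootEdge]⟩

lemma prod_split {G : SimpleGraph V} {S : Finset (Sym2 (Option V))}
    (hS : ∀ e ∈ S, e ∈ (aug G).edgeSet) (f : Sym2 (Option V) → ℝ) :
    ∏ e ∈ S, f e = (∏ e ∈ forestOf S, f e) * ∏ i ∈ roots S, f (rootEdge i) := by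
  rw [← Finset.prod_filter_not_mul_prod_filter S (fun e => (none : Option V) ∈ e),
    filter_none_eq hS, Finset.prod_image rootEdge_injective.injOn]
  rfl

lemma card_split {G : SimpleGraph V} {S : Finset (Sym2 (Option V))}
    (hS : ∀ e ∈ S, e ∈ (aug G).edgeSet) :
    S.card = (forestOf S).card + (roots S).card := by
  rw [← Finset.card_filter_add_card_filter_not (s := S) (fun e => (none : Option V) ∈ e),
    filter_none_eq hS, Finset.card_image_of_injective _ rootEdge_injective, add_comm]
  rfl

lemma mem_augE {G : SimpleGraph V} {e : Sym2 (Option V)} : e ∈ augE G ↔ e ∈ (aug G).edgeSet := by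
  simp [augE]

lemma roots_augE (G : SimpleGraph V) : roots (augE G) = Finset.univ := by
  ext i
  simp [roots, mem_augE, rootEdge_mem_aug]

lemma exists_of_mem_forestOf {G : SimpleGraph V} {S : Finset (Sym2 (Option V))}
    (hS : ∀ e ∈ S, e ∈ (aug G).edgeSet) {e : Sym2 (Option V)} (he : e ∈ forestOf S) :
    ∃ i j : V, G.Adj i j ∧ e = s(some i, some j) := by
  simp only [forestOf, Finset.mem_filter] at he
  obtain ⟨he, hn⟩ := he
  have := hS e he
  induction e using Sym2.ind with
  | _ a b =>
    cases a with
    | none => simp at hn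
    | some i =>
      cases b with
      | none => simp at hn
      | some j => exact ⟨i, j, aug_adj_some.1 (by simpa using this), rfl⟩

lemma mem_STrees {G : SimpleGraph V} {T : Finset (Sym2 (Option V))} :
    T ∈ STrees (aug G) ↔ IsSpanningTree (aug G) T := by
  simp [STrees]

lemma sub_of_mem_STrees {G : SimpleGraph V} {T : Finset (Sym2 (Option V))}
    (hT : T ∈ STrees (aug G)) : ∀ e ∈ T, e ∈ (aug G).edgeSet :=
  fun _ he => (mem_STrees.1 hT).1 he

/-- `T` has `|V|` edges, which matches the power of `b` in the Jacobian of the substitution. -/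
lemma card_of_mem_STrees {G : SimpleGraph V} {T : Finset (Sym2 (Option V))}
    (hT : T ∈ STrees (aug G)) : (forestOf T).card + (roots T).card = Fintype.card V := by
  rw [← card_split (sub_of_mem_STrees hT)]
  have h := (mem_STrees.1 hT).2.card_edgeFinset
  have h2 : (SimpleGraph.fromEdgeSet (↑T : Set (Sym2 (Option V)))).edgeFinset = T := by
    ext e
    simp only [SimpleGraph.mem_edgeFinset, SimpleGraph.edgeSet_fromEdgeSet, Set.mem_sdiff,
      Finset.mem_coe]
    refine ⟨fun h => h.1, fun h => ⟨h, ?_⟩⟩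
    exact (aug G).not_isDiag_of_mem_edgeSet (sub_of_mem_STrees hT e h)
  rw [h2, Fintype.card_option] at h
  omega

/-- A spanning tree of `Γ` together with the edge from `x` to `ρ` is a spanning tree whose only root
is `x`, and in it `x` and `y` are connected without using `ρ`. -/
lemma exists_tree {G : SimpleGraph V} (hG : G.Connected) (x y : V) :
    ∃ T ∈ STrees (aug G), roots T = {x} ∧ connIn T x y := by
  let H : SimpleGraph (Option V) := SimpleGraph.fromRel (fun a b =>
    match a, b with
    | some i, some j => G.Adj i j
    | some i, none => i = x
    | _, _ => False)
  have hss : ∀ {i j}, H.Adj (some i) (some j) ↔ G.Adj i j := by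
    intro i j
    simp only [H, SimpleGraph.fromRel_adj]
    constructor
    · rintro ⟨_, h | h⟩
      · exact h
      · exact h.symm
    · intro h
      exact ⟨by simpa using h.ne, Or.inl h⟩
  have hsn : ∀ {i}, H.Adj (some i) none ↔ i = x := by
    intro i
    simp [H]
  have hHle : H ≤ aug G := by
    intro a b hab
    cases a with
    | none =>
      cases b with
      | none => exact absurd rfl hab.ne
      | some j => simp [aug]
    | some i =>
      cases b with
      | none => simp [aug]
      | some j => exact aug_adj_some.2 (hss.1 hab)
  have hreach : ∀ i, H.Reachable (some x) (some i) := by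
    intro i
    have h := (SimpleGraph.reachable_iff_reflTransGen x i).1 (hG.preconnected x i)
    induction h with
    | refl => exact SimpleGraph.Reachable.refl _
    | tail _ hab ih => exact ih.trans (hss.2 hab).reachable
  have hHc : H.Connected := by
    rw [SimpleGraph.connected_iff_exists_forall_reachable]
    refine ⟨some x, fun a => ?_⟩
    cases a with
    | none => exact (hsn.2 rfl).reachable
    | some i => exact hreach i
  obtain ⟨K, hKH, hK⟩ := hHc.exists_isTree_le
  have hfe : SimpleGraph.fromEdgeSet (↑K.edgeFinset : Set (Sym2 (Option V))) = K := by
    rw [SimpleGraph.coe_edgeFinset, SimpleGraph.fromEdgeSet_edgeSet]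
  have hmem : ∀ a b, s(a, b) ∈ K.edgeFinset ↔ K.Adj a b := by
    intro a b
    rw [SimpleGraph.mem_edgeFinset, SimpleGraph.mem_edgeSet]
  refine ⟨K.edgeFinset, mem_STrees.2 ⟨?_, ?_⟩, ?_, ?_⟩
  · rw [SimpleGraph.coe_edgeFinset]
    exact SimpleGraph.edgeSet_subset_edgeSet.2 (hKH.trans hHle)
  · rw [hfe]; exact hK
  · -- `ρ` has a neighbour in `K`, and `x` is its only neighbour in `H`
    have h1 : ∀ i, K.Adj (some i) none → i = x := fun i h => hsn.1 (hKH h)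
    have h2 : K.Adj (some x) none := by
      obtain ⟨w⟩ := hK.1.preconnected none (some x)
      cases w with
      | @cons _ b _ h _ =>
        cases b with
        | none => exact absurd rfl h.ne
        | some i =>
          have := h1 i h.symm
          subst this
          exact h.symm
    ext i
    simp only [roots, rootEdge, Finset.mem_filter, Finset.mem_univ, true_and, hmem,
      Finset.mem_singleton]
    exact ⟨h1 i, fun h => h ▸ h2⟩
  · -- collapse `ρ` onto `x`
    unfold connIn
    have key : ∀ a b : Option V, K.Reachable a b →
        (SimpleGraph.fromEdgeSet (↑(forestOf K.edgeFinset) : Set (Sym2 (Option V)))).Reachable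
          (some (a.getD x)) (some (b.getD x)) := by
      intro a b hab
      rw [SimpleGraph.reachable_iff_reflTransGen] at hab
      induction hab with
      | refl => exact SimpleGraph.Reachable.refl _
      | @tail b c _ hbc ih =>
        refine ih.trans ?_
        cases b with
        | none =>
          cases c with
          | none => exact absurd rfl hbc.ne
          | some j =>
            have : j = x := hsn.1 (hKH hbc.symm)
            subst this
            exact SimpleGraph.Reachable.refl _
        | some i =>
          cases c with
          | none =>
            have : i = x := hsn.1 (hKH hbc)
            subst this
            exact SimpleGraph.Reachable.refl _
          | some j =>
            refine SimpleGraph.Adj.reachable ?_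
            simp only [Option.getD_some, SimpleGraph.fromEdgeSet_adj, forestOf, Finset.coe_filter,
              Set.mem_ofPred_eq, hmem]
            exact ⟨⟨hbc, by simp⟩, hbc.ne⟩
    exact key (some x) (some y) (hK.1.preconnected _ _)


/-! ### The integrand in the new variables -/

/-- The product of the Gibbs factors of the edges of the original graph. -/
noncomputable def innerGibbs (G : SimpleGraph V) (β : V → V → ℝ) (z r : V → ℝ) : ℝ :=
  ∏ e ∈ forestOf (augE G), gibbs β 0 z r e

/-- The part of the integrand depending only on the differences `z = zer x t`: reference density,
weight of `T`, and numerator of the observable. -/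
noncomputable def treePart (β : V → V → ℝ) (pv q : V → ℝ) (x y : V)
    (T : Finset (Sym2 (Option V))) (z : V → ℝ) : ℝ :=
  (∏ j, Real.exp (-z j) / (2 * Real.pi)) * (∏ e ∈ forestOf T, treeW β 0 z e) *
    (∏ i ∈ roots T, q i * Real.exp (z i)) *
    (Real.exp (z y) / (pv x * Real.exp (z x) + pv y * Real.exp (z y)))

/-- The product of the Gibbs factors of the edges to `ρ`, in the new variables. -/
noncomputable def rootGibbs (q : V → ℝ) (x : V) (κ : (V → ℝ) → ℝ) (ε : ℝ) (t s : V → ℝ) : ℝ :=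
  ∏ i, Real.exp (-(q i * ((1 / 2) * (Real.exp (t x + zer x t i) +
    ε ^ 2 * Real.exp (-(t x + zer x t i))) - ε + (1 / 2) *
    (κ (zer x t) * Real.exp (-t x / 2) * s x + ε * Real.exp (-t x) * zer x s i) ^ 2 *
      Real.exp (t x + zer x t i))))

/-- The integrand for the tree `T` and pinning `ε q` in the new variables, where `κ` is the
scale of the variable `s x` and `X` is an additional observable. It makes sense at `ε = 0`, where
only trees with a single root survive. -/
noncomputable def newInt (G : SimpleGraph V) (β : V → V → ℝ) (pv q : V → ℝ) (x y : V)
    (κ X : (V → ℝ) → ℝ) (T : Finset (Sym2 (Option V))) (ε : ℝ) (p : (V → ℝ) × (V → ℝ)) : ℝ :=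
  (if rootEdge x ∈ T ∧ connIn T x y then 1 else 0) *
    ((ε ^ 2 * Real.exp (-p.1 x)) ^ ((roots T).card - 1) * Real.exp (p.1 x / 2) *
      κ (zer x p.1) * treePart β pv q x y T (zer x p.1) *
      innerGibbs G β (zer x p.1) (zer x p.2) * rootGibbs q x κ ε p.1 p.2 * X p.1)

lemma gibbs_some {β : V → V → ℝ} (hβ : ∀ i j, β i j = β j i) (q t s : V → ℝ) (i j : V) :
    gibbs β q t s s(some i, some j) = Real.exp (-(β i j * (Real.cosh (t i - t j) +
      (1 / 2) * (s i - s j) ^ 2 * Real.exp (t i + t j) - 1))) := by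
  simp only [gibbs, esym, Sym2.lift_mk, bres, Bfun, extV, Option.elim]
  rw [hβ j i, ← Real.cosh_neg (t j - t i), add_comm (t j) (t i),
    show (s j - s i) ^ 2 = (s i - s j) ^ 2 by ring, neg_sub]
  ring

lemma treeW_some {β : V → V → ℝ} (hβ : ∀ i j, β i j = β j i) (q t : V → ℝ) (i j : V) :
    treeW β q t s(some i, some j) = β i j * Real.exp (t i + t j) := by
  simp only [treeW, esym, Sym2.lift_mk, bres, extV, Option.elim]
  rw [hβ j i, add_comm (t j) (t i)]
  ring

lemma gibbs_root (β : V → V → ℝ) (q t s : V → ℝ) (i : V) :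
    gibbs β q t s (rootEdge i) = Real.exp (-(q i * (Real.cosh (t i) +
      (1 / 2) * (s i) ^ 2 * Real.exp (t i) - 1))) := by
  simp only [rootEdge, gibbs, esym, Sym2.lift_mk, bres, Bfun, extV, Option.elim]
  simp

lemma treeW_root (β : V → V → ℝ) (q t : V → ℝ) (i : V) :
    treeW β q t (rootEdge i) = q i * Real.exp (t i) := by
  simp only [rootEdge, treeW, esym, Sym2.lift_mk, bres, extV, Option.elim]
  simp

lemma exp_half_sq (u : ℝ) : Real.exp u = Real.exp (u / 2) ^ 2 := by
  rw [← Real.exp_nat_mul]; congr 1; push_cast; ring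

/-- Jacobian times original integrand is the integrand in the new variables. The substitution gives
`e^{t i} = b⁻¹ e^{z i}` with `b = ε e^{-t x}`; the edges of `Γ` are invariant under this scaling, and
what remains is to collect the powers of `b`. -/
lemma newInt_eq {G : SimpleGraph V} {β : V → V → ℝ} (hβ : ∀ i j, β i j = β j i)
    {x y : V} {pv q : V → ℝ} (hpx : 0 < pv x) (hpy : 0 < pv y) (κ X : (V → ℝ) → ℝ)
    {T : Finset (Sym2 (Option V))} (hT : T ∈ STrees (aug G)) {ε : ℝ} (hε : 0 < ε)
    (g : (V → ℝ) → ℝ) (hg : ∀ t, g (fun i => shear x t i + -Real.log ε) = X t)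
    (p : (V → ℝ) × (V → ℝ)) :
    κ (zer x p.1) * Real.exp (-p.1 x / 2) * (ε * Real.exp (-p.1 x)) ^ (Fintype.card V - 1) *
      (dens G β (fun i => q i * ε) (fun i => shear x p.1 i + -Real.log ε)
        (scl x (κ (zer x p.1) * Real.exp (-p.1 x / 2)) (ε * Real.exp (-p.1 x)) p.2) T *
        (obs pv x y (fun i => shear x p.1 i + -Real.log ε) T *
          g (fun i => shear x p.1 i + -Real.log ε)))
      = newInt G β pv q x y κ X T ε p := by
  obtain ⟨t, s⟩ := p
  rw [hg]
  simp only [newInt, obs]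
  by_cases hind : rootEdge x ∈ T ∧ connIn T x y
  swap
  · simp [hind]
  rw [if_pos hind]
  set z := zer x t with hz
  set r := zer x s with hr
  set u := t x with hu
  set b := ε * Real.exp (-u) with hb
  set c := κ z * Real.exp (-u / 2) with hc
  have hb0 : 0 < b := by positivity
  have hexp : ∀ i, Real.exp (shear x t i + -Real.log ε) = b⁻¹ * Real.exp (z i) := by
    intro i
    rw [shear, ← hz, ← hu, Real.exp_add, Real.exp_add, Real.exp_neg (Real.log ε), Real.exp_log hε,
      hb, Real.exp_neg u]
    field_simp
  have hroots : 1 ≤ (roots T).card := by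
    refine Finset.card_pos.2 ⟨x, ?_⟩
    simp [roots, hind.1]
  have hcard := card_of_mem_STrees hT
  have hsub := sub_of_mem_STrees hT
  -- the reference density
  have e1 : (∏ j, Real.exp (-(shear x t j + -Real.log ε)) / (2 * Real.pi)) =
      b ^ Fintype.card V * ∏ j, Real.exp (-z j) / (2 * Real.pi) := by
    rw [← Finset.card_univ, ← Finset.prod_const, ← Finset.prod_mul_distrib]
    refine Finset.prod_congr rfl fun j _ => ?_
    rw [Real.exp_neg, hexp, Real.exp_neg]
    field_simp
  -- the Gibbs factors of the graph are scale invariant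
  have e2 : ∏ e ∈ forestOf (augE G), gibbs β (fun i => q i * ε)
      (fun i => shear x t i + -Real.log ε) (scl x c b s) e = innerGibbs G β z r := by
    refine Finset.prod_congr rfl fun e he => ?_
    obtain ⟨i, j, -, rfl⟩ := exists_of_mem_forestOf (fun e he => mem_augE.1 he) he
    rw [gibbs_some hβ, gibbs_some hβ]
    have h1 : shear x t i + -Real.log ε - (shear x t j + -Real.log ε) = z i - z j := by
      simp only [shear, ← hz]; ring
    have h2 : scl x c b s i - scl x c b s j = b * (r i - r j) := by
      simp only [scl, ← hr]; ring
    rw [h1, h2, Real.exp_add (shear x t i + -Real.log ε), hexp, hexp, Real.exp_add (z i)]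
    congr 3
    field_simp
  have e3 : ∏ e ∈ forestOf T, treeW β (fun i => q i * ε) (fun i => shear x t i + -Real.log ε) e
      = (b⁻¹ ^ 2) ^ (forestOf T).card * ∏ e ∈ forestOf T, treeW β 0 z e := by
    rw [← Finset.prod_const, ← Finset.prod_mul_distrib]
    refine Finset.prod_congr rfl fun e he => ?_
    obtain ⟨i, j, -, rfl⟩ := exists_of_mem_forestOf hsub he
    rw [treeW_some hβ, treeW_some hβ, Real.exp_add, hexp, hexp, Real.exp_add]
    ring
  have e4 : ∏ i ∈ roots T, treeW β (fun i => q i * ε) (fun i => shear x t i + -Real.log ε)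
      (rootEdge i) = (Real.exp u) ^ (roots T).card * ∏ i ∈ roots T, q i * Real.exp (z i) := by
    rw [← Finset.prod_const, ← Finset.prod_mul_distrib]
    refine Finset.prod_congr rfl fun i _ => ?_
    rw [treeW_root, hexp, hb, Real.exp_neg]
    field_simp
  have e5 : ∏ i, gibbs β (fun i => q i * ε) (fun i => shear x t i + -Real.log ε)
      (scl x c b s) (rootEdge i) = rootGibbs q x κ ε t s := by
    unfold rootGibbs
    refine Finset.prod_congr rfl fun i _ => ?_
    rw [gibbs_root, Real.cosh_eq, Real.exp_neg (shear x t i + -Real.log ε), hexp]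
    simp only [scl, ← hz, ← hr, ← hu, ← hc, ← hb]
    rw [Real.exp_neg (u + z i), Real.exp_add u (z i)]
    congr 2
    rw [mul_assoc]
    congr 1
    rw [hb, Real.exp_neg]
    field_simp
    ring
  have e6 : Real.exp (shear x t x + -Real.log ε + (shear x t y + -Real.log ε)) /
      (pv x * Real.exp (shear x t x + -Real.log ε) + pv y * Real.exp (shear x t y + -Real.log ε))
      = b⁻¹ * (Real.exp (z y) / (pv x * Real.exp (z x) + pv y * Real.exp (z y))) := by
    have hzx : z x = 0 := by simp [hz]
    rw [Real.exp_add (shear x t x + -Real.log ε), hexp, hexp, hzx, Real.exp_zero]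
    have := Real.exp_pos (z y)
    field_simp
  unfold dens
  rw [prod_split hsub, show (Finset.univ.filter (fun e : Sym2 (Option V) => e ∈ (aug G).edgeSet))
    = augE G from rfl, prod_split (G := G) (S := augE G) (fun e he => mem_augE.1 he), roots_augE,
    e1, e2, e3, e4, e5, e6]
  unfold treePart
  generalize (∏ j, Real.exp (-z j) / (2 * Real.pi)) = A1
  generalize (∏ e ∈ forestOf T, treeW β 0 z e) = A2
  generalize (∏ i ∈ roots T, q i * Real.exp (z i)) = A3
  generalize (Real.exp (z y) / (pv x * Real.exp (z x) + pv y * Real.exp (z y))) = A4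
  generalize innerGibbs G β z r = A5
  generalize rootGibbs q x κ ε t s = A6
  clear_value b
  -- the powers of `b` and `exp u`
  have hpow : Real.exp (-u / 2) * b ^ (Fintype.card V - 1) * (b ^ Fintype.card V *
      (b⁻¹ ^ 2) ^ (forestOf T).card * (Real.exp u) ^ (roots T).card * b⁻¹) =
      (ε ^ 2 * Real.exp (-u)) ^ ((roots T).card - 1) * Real.exp (u / 2) := by
    obtain ⟨k, hk⟩ : ∃ k, (roots T).card = k + 1 := ⟨_, (Nat.sub_add_cancel hroots).symm⟩
    rw [hk] at hcard ⊢
    rw [← hcard]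
    set m := (forestOf T).card
    have hm : m + (k + 1) - 1 = m + k := by omega
    rw [hm, Nat.add_sub_cancel]
    have hw : 0 < Real.exp (u / 2) := Real.exp_pos _
    have h1 : Real.exp (-u / 2) = (Real.exp (u / 2))⁻¹ := by rw [← Real.exp_neg]; congr 1; ring
    have h2 : ε = b * Real.exp (u / 2) ^ 2 := by
      rw [← exp_half_sq, hb, Real.exp_neg]; field_simp
    rw [h1, Real.exp_neg, exp_half_sq u, h2]
    generalize Real.exp (u / 2) = w at hw
    have h3 : b ^ (m + k) * (b ^ (m + (k + 1)) * (b⁻¹ ^ 2) ^ m) * b⁻¹ = b ^ (2 * k) := by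
      rw [← pow_mul, inv_pow]
      field_simp
      ring
    calc w⁻¹ * b ^ (m + k) * (b ^ (m + (k + 1)) * (b⁻¹ ^ 2) ^ m * (w ^ 2) ^ (k + 1) * b⁻¹)
        = (b ^ (m + k) * (b ^ (m + (k + 1)) * (b⁻¹ ^ 2) ^ m) * b⁻¹) * (w⁻¹ * (w ^ 2) ^ (k + 1)) := by
          ring
      _ = b ^ (2 * k) * (w⁻¹ * (w ^ 2) ^ (k + 1)) := by rw [h3]
      _ = ((b * w ^ 2) ^ 2 * (w ^ 2)⁻¹) ^ k * w := by
          have h4 : (b * w ^ 2) ^ 2 * (w ^ 2)⁻¹ = b ^ 2 * w ^ 2 := by field_simp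
          have h5 : w⁻¹ * (w ^ 2) ^ (k + 1) = (w ^ 2) ^ k * w := by
            rw [pow_succ]; field_simp
          rw [h4, h5, mul_pow, ← pow_mul]
          ring
  rw [show c = κ z * Real.exp (-u / 2) from rfl]
  linear_combination (A1 * A2 * A3 * A4 * A5 * A6 * κ z * X t) * hpow


/-! ### Domination -/

/-- `f` is bounded by a constant times a power of `exp (∑ |z i|)`. -/
def ExpBdd (f : (V → ℝ) → ℝ) : Prop :=
  ∃ (C : ℝ) (K : ℕ), 0 ≤ C ∧ ∀ z, |f z| ≤ C * Real.exp (∑ i, |z i|) ^ K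

lemma one_le_expS (z : V → ℝ) : 1 ≤ Real.exp (∑ i, |z i|) :=
  Real.one_le_exp (Finset.sum_nonneg fun _ _ => abs_nonneg _)

lemma abs_le_S (z : V → ℝ) (i : V) : |z i| ≤ ∑ i, |z i| :=
  Finset.single_le_sum (f := fun i => |z i|) (fun _ _ => abs_nonneg _) (Finset.mem_univ i)

lemma ExpBdd.mul {f g : (V → ℝ) → ℝ} (hf : ExpBdd f) (hg : ExpBdd g) :
    ExpBdd fun z => f z * g z := by
  obtain ⟨C, K, hC, hf⟩ := hf
  obtain ⟨D, L, hD, hg⟩ := hg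
  refine ⟨C * D, K + L, by positivity, fun z => ?_⟩
  rw [abs_mul, pow_add]
  calc _ ≤ _ := mul_le_mul (hf z) (hg z) (abs_nonneg _) (by positivity)
    _ = _ := by ring

lemma ExpBdd.add {f g : (V → ℝ) → ℝ} (hf : ExpBdd f) (hg : ExpBdd g) :
    ExpBdd fun z => f z + g z := by
  obtain ⟨C, K, hC, hf⟩ := hf
  obtain ⟨D, L, hD, hg⟩ := hg
  refine ⟨C + D, K + L, by positivity, fun z => ?_⟩
  have h1 := one_le_expS z
  have h2 : Real.exp (∑ i, |z i|) ^ K ≤ Real.exp (∑ i, |z i|) ^ (K + L) :=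
    pow_le_pow_right₀ h1 (by omega)
  have h3 : Real.exp (∑ i, |z i|) ^ L ≤ Real.exp (∑ i, |z i|) ^ (K + L) :=
    pow_le_pow_right₀ h1 (by omega)
  calc _ ≤ |f z| + |g z| := abs_add_le _ _
    _ ≤ _ := add_le_add ((hf z).trans (mul_le_mul_of_nonneg_left h2 hC))
        ((hg z).trans (mul_le_mul_of_nonneg_left h3 hD))
    _ = _ := by ring

lemma ExpBdd.const (c : ℝ) : ExpBdd fun _ : V → ℝ => c :=
  ⟨|c|, 0, abs_nonneg _, fun z => by simp⟩

lemma ExpBdd.prod {ι : Type*} (s : Finset ι) {f : ι → (V → ℝ) → ℝ}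
    (hf : ∀ i ∈ s, ExpBdd (f i)) : ExpBdd fun z => ∏ i ∈ s, f i z := by
  induction s using Finset.induction_on with
  | empty => simpa using ExpBdd.const 1
  | insert a s ha ih =>
    simp only [Finset.prod_insert ha]
    exact (hf a (Finset.mem_insert_self _ _)).mul
      (ih fun i hi => hf i (Finset.mem_insert_of_mem hi))

lemma ExpBdd.mono {f g : (V → ℝ) → ℝ} (hg : ExpBdd g) (h : ∀ z, |f z| ≤ |g z|) : ExpBdd f := by
  obtain ⟨C, K, hC, hg⟩ := hg
  exact ⟨C, K, hC, fun z => (h z).trans (hg z)⟩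

lemma expBdd_exp (i : V) : ExpBdd fun z : V → ℝ => Real.exp (z i) :=
  ⟨1, 1, zero_le_one, fun z => by
    rw [Real.abs_exp, one_mul, pow_one]
    exact Real.exp_le_exp.2 ((le_abs_self _).trans (abs_le_S z i))⟩

lemma expBdd_exp_neg (i : V) : ExpBdd fun z : V → ℝ => Real.exp (-z i) :=
  ⟨1, 1, zero_le_one, fun z => by
    rw [Real.abs_exp, one_mul, pow_one]
    exact Real.exp_le_exp.2 ((neg_le_abs _).trans (abs_le_S z i))⟩

lemma expBdd_treePart {G : SimpleGraph V} {β : V → V → ℝ} (hβ : ∀ i j, β i j = β j i)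
    {x y : V} {pv q : V → ℝ} (hpx : 0 < pv x) (hpy : 0 < pv y)
    {T : Finset (Sym2 (Option V))} (hT : T ∈ STrees (aug G)) :
    ExpBdd (treePart β pv q x y T) := by
  unfold treePart
  refine ((ExpBdd.mul (ExpBdd.prod _ fun j _ => ?_) (ExpBdd.prod _ fun e he => ?_)).mul
    (ExpBdd.prod _ fun i _ => ?_)).mul ?_
  · exact (expBdd_exp_neg j).mul (ExpBdd.const _)
  · obtain ⟨i, j, -, rfl⟩ := exists_of_mem_forestOf (sub_of_mem_STrees hT) he
    have : (fun z : V → ℝ => treeW β 0 z s(some i, some j)) =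
        fun z => β i j * (Real.exp (z i) * Real.exp (z j)) := by
      ext z; rw [treeW_some hβ, Real.exp_add]
    rw [this]
    exact (ExpBdd.const _).mul ((expBdd_exp i).mul (expBdd_exp j))
  · exact (ExpBdd.const _).mul (expBdd_exp i)
  · refine ExpBdd.mono (ExpBdd.const (pv y)⁻¹) fun z => ?_
    have h1 := Real.exp_pos (z x)
    have h2 := Real.exp_pos (z y)
    rw [abs_of_pos (by positivity), abs_of_pos (by positivity), div_le_iff₀ (by positivity),
      mul_add]
    have : (pv y)⁻¹ * (pv y * Real.exp (z y)) = Real.exp (z y) := by field_simp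
    rw [this]
    have : 0 ≤ (pv y)⁻¹ * (pv x * Real.exp (z x)) := by positivity
    linarith

lemma gibbs_pos (β : V → V → ℝ) (q t s : V → ℝ) (e : Sym2 (Option V)) : 0 < gibbs β q t s e := by
  induction e using Sym2.ind with
  | _ a b =>
    simp only [gibbs, esym, Sym2.lift_mk]
    positivity

lemma innerGibbs_pos (G : SimpleGraph V) (β : V → V → ℝ) (z r : V → ℝ) :
    0 < innerGibbs G β z r :=
  Finset.prod_pos fun e _ => gibbs_pos _ _ _ _ e

section
variable {G : SimpleGraph V} {β : V → V → ℝ} (hβ : ∀ i j, β i j = β j i)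
  (hβpos : ∀ i j, G.Adj i j → 0 < β i j)
include hβ hβpos

lemma gibbs_le_one (z r : V → ℝ) {e : Sym2 (Option V)} (he : e ∈ forestOf (augE G)) :
    gibbs β 0 z r e ≤ 1 := by
  obtain ⟨i, j, hij, rfl⟩ := exists_of_mem_forestOf (fun e he => mem_augE.1 he) he
  rw [gibbs_some hβ, Real.exp_le_one_iff, neg_nonpos]
  have h1 := Real.one_le_cosh (z i - z j)
  have h2 : 0 ≤ (1 / 2) * (r i - r j) ^ 2 * Real.exp (z i + z j) := by positivity
  exact mul_nonneg (hβpos i j hij).le (by linarith)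

lemma innerGibbs_le_one (z r : V → ℝ) : innerGibbs G β z r ≤ 1 :=
  Finset.prod_le_one (fun e _ => (gibbs_pos _ _ _ _ e).le) fun _ he => gibbs_le_one hβ hβpos z r he

/-- The energy of a single edge is at most the total energy `-log (innerGibbs G β z r)`. -/
lemma edge_energy_le (z r : V → ℝ) {i j : V} (hij : G.Adj i j) :
    β i j * (Real.cosh (z i - z j) + (1 / 2) * (r i - r j) ^ 2 * Real.exp (z i + z j) - 1) ≤
      -Real.log (innerGibbs G β z r) := by
  have he : s(some i, some j) ∈ forestOf (augE G) := by
    simp [forestOf, mem_augE, aug_adj_some, hij]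
  have h1 : innerGibbs G β z r ≤ gibbs β 0 z r s(some i, some j) := by
    unfold innerGibbs
    rw [← Finset.mul_prod_erase _ _ he]
    refine mul_le_of_le_one_right (gibbs_pos _ _ _ _ _).le ?_
    exact Finset.prod_le_one (fun e _ => (gibbs_pos _ _ _ _ e).le) fun e he' =>
      gibbs_le_one hβ hβpos z r (Finset.mem_of_mem_erase he')
  rw [gibbs_some hβ] at h1
  have := Real.log_le_log (innerGibbs_pos G β z r) h1
  rw [Real.log_exp] at this
  linarith

end

/-- `f` is bounded by a power of `1 +` the energy of the inner edges, for `z` and `r` vanishing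
at `x`. -/
def EnergyBdd (G : SimpleGraph V) (β : V → V → ℝ) (x : V) (f : (V → ℝ) → (V → ℝ) → ℝ) : Prop :=
  ∃ (C : ℝ) (N : ℕ), 0 ≤ C ∧ ∀ z r, z x = 0 → r x = 0 →
    |f z r| ≤ C * (1 - Real.log (innerGibbs G β z r)) ^ N

section
variable {G : SimpleGraph V} {β : V → V → ℝ} (hβ : ∀ i j, β i j = β j i)
  (hβpos : ∀ i j, G.Adj i j → 0 < β i j) {x : V}
include hβ hβpos

lemma one_le_energy (z r : V → ℝ) : 1 ≤ 1 - Real.log (innerGibbs G β z r) := by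
  have := Real.log_nonpos (innerGibbs_pos G β z r).le (innerGibbs_le_one hβ hβpos z r)
  linarith

lemma EnergyBdd.mul {f g : (V → ℝ) → (V → ℝ) → ℝ} (hf : EnergyBdd G β x f)
    (hg : EnergyBdd G β x g) : EnergyBdd G β x fun z r => f z r * g z r := by
  obtain ⟨C, K, hC, hf⟩ := hf
  obtain ⟨D, L, hD, hg⟩ := hg
  refine ⟨C * D, K + L, by positivity, fun z r hz hr => ?_⟩
  have := one_le_energy hβ hβpos z r
  rw [abs_mul, pow_add]
  calc _ ≤ _ := mul_le_mul (hf z r hz hr) (hg z r hz hr) (abs_nonneg _) (by positivity)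
    _ = _ := by ring

lemma EnergyBdd.add {f g : (V → ℝ) → (V → ℝ) → ℝ} (hf : EnergyBdd G β x f)
    (hg : EnergyBdd G β x g) : EnergyBdd G β x fun z r => f z r + g z r := by
  obtain ⟨C, K, hC, hf⟩ := hf
  obtain ⟨D, L, hD, hg⟩ := hg
  refine ⟨C + D, K + L, by positivity, fun z r hz hr => ?_⟩
  have h1 := one_le_energy hβ hβpos z r
  set H := 1 - Real.log (innerGibbs G β z r)
  have h2 : H ^ K ≤ H ^ (K + L) := pow_le_pow_right₀ h1 (by omega)
  have h3 : H ^ L ≤ H ^ (K + L) := pow_le_pow_right₀ h1 (by omega)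
  calc _ ≤ |f z r| + |g z r| := abs_add_le _ _
    _ ≤ _ := add_le_add ((hf z r hz hr).trans (mul_le_mul_of_nonneg_left h2 hC))
        ((hg z r hz hr).trans (mul_le_mul_of_nonneg_left h3 hD))
    _ = _ := by ring

omit hβ hβpos in
lemma EnergyBdd.const (c : ℝ) : EnergyBdd G β x fun _ _ => c :=
  ⟨|c|, 0, abs_nonneg _, fun z r _ _ => by simp⟩

lemma EnergyBdd.prod {ι : Type*} (s : Finset ι) {f : ι → (V → ℝ) → (V → ℝ) → ℝ}
    (hf : ∀ i ∈ s, EnergyBdd G β x (f i)) : EnergyBdd G β x fun z r => ∏ i ∈ s, f i z r := by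
  induction s using Finset.induction_on with
  | empty => simpa using EnergyBdd.const 1
  | insert a s ha ih =>
    simp only [Finset.prod_insert ha]
    exact EnergyBdd.mul hβ hβpos (hf a (Finset.mem_insert_self _ _))
      (ih fun i hi => hf i (Finset.mem_insert_of_mem hi))

lemma EnergyBdd.pow {f : (V → ℝ) → (V → ℝ) → ℝ} (hf : EnergyBdd G β x f) (n : ℕ) :
    EnergyBdd G β x fun z r => f z r ^ n := by
  simpa using EnergyBdd.prod hβ hβpos (Finset.range n) (f := fun _ => f) (fun _ _ => hf)

omit hβ hβpos in
lemma EnergyBdd.mono {f g : (V → ℝ) → (V → ℝ) → ℝ} (hg : EnergyBdd G β x g)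
    (h : ∀ z r, z x = 0 → r x = 0 → |f z r| ≤ |g z r|) : EnergyBdd G β x f := by
  obtain ⟨C, K, hC, hg⟩ := hg
  exact ⟨C, K, hC, fun z r hz hr => (h z r hz hr).trans (hg z r hz hr)⟩

/-- Along an edge, `|z i - z j|` is at most logarithmic in the energy. -/
lemma energyBdd_edge {i j : V} (hij : G.Adj i j) :
    EnergyBdd G β x fun z _ => Real.exp |z i - z j| := by
  have hb := hβpos i j hij
  refine ⟨2 * (1 + (β i j)⁻¹), 1, by positivity, fun z r _ _ => ?_⟩
  have h1 := edge_energy_le hβ hβpos z r hij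
  have h0 := one_le_energy hβ hβpos z r
  set h := -Real.log (innerGibbs G β z r) with hh
  have h2 : 0 ≤ (1 / 2) * (r i - r j) ^ 2 * Real.exp (z i + z j) := by positivity
  have h3 : Real.cosh (z i - z j) - 1 ≤ (β i j)⁻¹ * h := by
    rw [inv_mul_eq_div, le_div_iff₀ hb]
    nlinarith
  have h4 : Real.exp |z i - z j| ≤ 2 * Real.cosh (z i - z j) := by
    rw [← Real.cosh_abs, Real.cosh_eq]
    have := Real.exp_pos (-|z i - z j|)
    linarith
  rw [Real.abs_exp, pow_one, sub_eq_add_neg 1, ← hh]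
  have h5 : 0 < (β i j)⁻¹ := by positivity
  have h6 : 0 ≤ h := by linarith
  nlinarith

/-- Summing the edge bounds along a path from `x`, where `z` vanishes. -/
lemma energyBdd_exp (hG : G.Connected) (i : V) :
    EnergyBdd G β x fun z _ => Real.exp |z i| := by
  have h := (SimpleGraph.reachable_iff_reflTransGen x i).1 (hG.preconnected x i)
  induction h with
  | refl =>
    refine (EnergyBdd.const 1).mono fun z r hz _ => ?_
    simp [hz]
  | @tail a b _ hab ih =>
    refine (EnergyBdd.mul hβ hβpos ih (energyBdd_edge hβ hβpos hab)).mono fun z r _ _ => ?_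
    rw [Real.abs_exp, ← Real.exp_add, Real.abs_exp, Real.exp_le_exp]
    have := abs_sub_abs_le_abs_sub (z b) (z a)
    rw [abs_sub_comm] at this
    linarith

lemma energyBdd_edge_sq (hG : G.Connected) {i j : V} (hij : G.Adj i j) :
    EnergyBdd G β x fun _ r => (r i - r j) ^ 2 := by
  have hb := hβpos i j hij
  have hH : EnergyBdd G β x fun z r => 1 - Real.log (innerGibbs G β z r) :=
    ⟨1, 1, zero_le_one, fun z r _ _ => by
      have := one_le_energy hβ hβpos z r
      rw [abs_of_pos (by linarith)]; simp⟩
  refine (EnergyBdd.mul hβ hβpos (EnergyBdd.mul hβ hβpos (EnergyBdd.const (2 * (β i j)⁻¹)) hH)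
    (EnergyBdd.mul hβ hβpos (energyBdd_exp hβ hβpos hG i) (energyBdd_exp hβ hβpos hG j))).mono
    fun z r _ _ => ?_
  have h1 := edge_energy_le hβ hβpos z r hij
  have h0 := one_le_energy hβ hβpos z r
  set h := -Real.log (innerGibbs G β z r) with hh
  rw [sub_eq_add_neg 1, ← hh] at h0 ⊢
  have hcosh := Real.one_le_cosh (z i - z j)
  have h2 : (r i - r j) ^ 2 * Real.exp (z i + z j) ≤ 2 * (β i j)⁻¹ * (1 + h) := by
    have h3 : (1 / 2) * (r i - r j) ^ 2 * Real.exp (z i + z j) ≤ (β i j)⁻¹ * h := by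
      rw [inv_mul_eq_div, le_div_iff₀ hb]
      nlinarith
    have : 0 < (β i j)⁻¹ := by positivity
    linarith
  rw [abs_of_nonneg (sq_nonneg _), ← Real.exp_add]
  refine le_trans ?_ (le_abs_self _)
  calc (r i - r j) ^ 2 = (r i - r j) ^ 2 * Real.exp (z i + z j) * Real.exp (-(z i + z j)) := by
        rw [mul_assoc, ← Real.exp_add]; simp
    _ ≤ _ := mul_le_mul h2 (Real.exp_le_exp.2 ?_) (Real.exp_pos _).le (by positivity)
  have := neg_le_abs (z i); have := neg_le_abs (z j); linarith

lemma energyBdd_sq (hG : G.Connected) (i : V) :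
    EnergyBdd G β x fun _ r => 1 + r i ^ 2 := by
  have h := (SimpleGraph.reachable_iff_reflTransGen x i).1 (hG.preconnected x i)
  induction h with
  | refl =>
    refine (EnergyBdd.const 1).mono fun z r _ hr => ?_
    simp [hr]
  | @tail a b _ hab ih =>
    refine (EnergyBdd.mul hβ hβpos (EnergyBdd.const 2) (EnergyBdd.add hβ hβpos ih
      (energyBdd_edge_sq hβ hβpos hG hab))).mono fun z r _ _ => ?_
    rw [abs_of_nonneg (by positivity), abs_of_nonneg (by positivity)]
    nlinarith [sq_nonneg (r a + (r a - r b))]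

omit hβ hβpos in
lemma pow_mul_exp_neg_le (n : ℕ) {a v : ℝ} (ha : 0 < a) (hv : 0 ≤ v) :
    v ^ n * Real.exp (-(a * v)) ≤ n.factorial / a ^ n := by
  have h := Real.pow_div_factorial_le_exp (a * v) (by positivity) n
  rw [Real.exp_neg, ← div_eq_mul_inv, div_le_iff₀ (Real.exp_pos _)]
  rw [div_le_iff₀ (by positivity), mul_pow] at h
  rw [div_mul_eq_mul_div, le_div_iff₀ (by positivity)]
  linarith

/-- The Gibbs factors of the graph beat every exponential in the `z` variables and every
polynomial in the `r` variables. -/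
lemma innerGibbs_decay (hG : G.Connected) (x : V) (K : ℕ) : ∃ C, 0 ≤ C ∧ ∀ z r : V → ℝ, z x = 0 →
    r x = 0 → innerGibbs G β z r * (Real.exp (∑ i, |z i|) ^ K * ∏ i, (1 + r i ^ 2)) ≤ C := by
  have h1 : EnergyBdd G β x fun z r => Real.exp (∑ i, |z i|) ^ K * ∏ i, (1 + r i ^ 2) := by
    refine EnergyBdd.mul hβ hβpos (EnergyBdd.pow hβ hβpos ?_ K)
      (EnergyBdd.prod hβ hβpos _ fun i _ => energyBdd_sq hβ hβpos hG i)
    simp only [Real.exp_sum]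
    exact EnergyBdd.prod hβ hβpos _ fun i _ => energyBdd_exp hβ hβpos hG i
  obtain ⟨C, N, hC, hb⟩ := h1
  refine ⟨Real.exp 1 * (C * N.factorial), by positivity, fun z r hz hr => ?_⟩
  have h2 := (le_abs_self _).trans (hb z r hz hr)
  have h0 := one_le_energy hβ hβpos z r
  set H := 1 - Real.log (innerGibbs G β z r) with hH
  have h3 : innerGibbs G β z r = Real.exp 1 * Real.exp (-(1 * H)) := by
    rw [← Real.exp_add, hH]
    ring_nf
    rw [Real.exp_log (innerGibbs_pos G β z r)]
  have h4 := pow_mul_exp_neg_le N one_pos (show 0 ≤ H by linarith)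
  rw [one_pow, div_one] at h4
  calc _ ≤ innerGibbs G β z r * (C * H ^ N) :=
        mul_le_mul_of_nonneg_left h2 (innerGibbs_pos G β z r).le
    _ = Real.exp 1 * (C * (H ^ N * Real.exp (-(1 * H)))) := by rw [h3]; ring
    _ ≤ _ := by gcongr

end


/-- The dominating function, a product of integrable functions of one variable. -/
noncomputable def dom (p : (V → ℝ) × (V → ℝ)) : ℝ :=
  (∏ i, Real.exp (-(1 / 2) * |p.1 i|)) * ∏ i, (1 + p.2 i ^ 2)⁻¹

lemma integrable_dom : Integrable (dom : (V → ℝ) × (V → ℝ) → ℝ) := by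
  have h1 : Integrable fun u : ℝ => Real.exp (-(1 / 2) * |u|) := by
    have hI : IntegrableOn (fun u : ℝ => Real.exp (-(1 / 2) * |u|)) (Set.Ioi 0) :=
      (integrableOn_exp_mul_Ioi (a := -(1 / 2)) (by norm_num) 0).congr_fun
        (fun u hu => by simp only [abs_of_pos (Set.mem_Ioi.1 hu)]) measurableSet_Ioi
    have hI' : IntegrableOn (fun u : ℝ => Real.exp (-(1 / 2) * |u|)) (Set.Iic 0) :=
      (integrableOn_exp_mul_Iic (a := 1 / 2) (by norm_num) 0).congr_fun
        (fun u hu => by simp only [abs_of_nonpos (Set.mem_Iic.1 hu)]; congr 1; ring) measurableSet_Iic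
    rw [← integrableOn_univ, ← Set.Iic_union_Ioi (a := (0 : ℝ))]
    exact hI'.union hI
  have h2 : Integrable fun u : ℝ => (1 + u ^ 2)⁻¹ := integrable_inv_one_add_sq
  exact (Integrable.fintype_prod (fun _ : V => h1)).mul_prod
    (Integrable.fintype_prod (fun _ : V => h2))

lemma rootGibbs_le {x : V} {q : V → ℝ} (hq : ∀ i, 0 ≤ q i) (κ : (V → ℝ) → ℝ) {ε : ℝ}
    (hε1 : ε ≤ 1) (t s : V → ℝ) :
    rootGibbs q x κ ε t s ≤ Real.exp (∑ i, q i) * (Real.exp (-(q x / 2 * Real.exp (t x))) *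
      Real.exp (-(q x / 2 * (ε ^ 2 * Real.exp (-t x)))) *
      Real.exp (-(q x / 2 * κ (zer x t) ^ 2 * s x ^ 2))) := by
  unfold rootGibbs
  rw [Real.exp_sum, ← Real.exp_add, ← Real.exp_add, ← Finset.mul_prod_erase _ _ (Finset.mem_univ x),
    ← Finset.mul_prod_erase (Finset.univ) (fun i => Real.exp (q i)) (Finset.mem_univ x),
    mul_right_comm (Real.exp (q x)), ← Real.exp_add (q x)]
  refine mul_le_mul (Real.exp_le_exp.2 ?_) ?_ (Finset.prod_nonneg fun _ _ => (Real.exp_pos _).le)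
    (Real.exp_pos _).le
  · simp only [zer_self, add_zero, mul_zero]
    have h1 : (κ (zer x t) * Real.exp (-t x / 2) * s x) ^ 2 * Real.exp (t x) =
        κ (zer x t) ^ 2 * s x ^ 2 := by
      have : Real.exp (-t x / 2) ^ 2 * Real.exp (t x) = 1 := by
        rw [← exp_half_sq, ← Real.exp_add]; simp
      linear_combination (κ (zer x t) ^ 2 * s x ^ 2) * this
    rw [mul_assoc (1 / 2 : ℝ), h1]
    nlinarith [hq x]
  · refine Finset.prod_le_prod (fun _ _ => (Real.exp_pos _).le) fun i _ => Real.exp_le_exp.2 ?_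
    rw [neg_le, ← mul_neg_one]
    refine mul_le_mul_of_nonneg_left ?_ (hq i)
    have : 0 ≤ (1 / 2) * (Real.exp (t x + zer x t i) + ε ^ 2 * Real.exp (-(t x + zer x t i))) := by
      positivity
    have : 0 ≤ (1 / 2) * (κ (zer x t) * Real.exp (-t x / 2) * s x +
      ε * Real.exp (-t x) * zer x s i) ^ 2 * Real.exp (t x + zer x t i) := by
      positivity
    linarith

lemma exp_half_mul_le {a : ℝ} (ha : 0 < a) (u : ℝ) :
    Real.exp (u / 2) * Real.exp (-(a * Real.exp u)) ≤ (1 + a⁻¹) * Real.exp (-(1 / 2) * |u|) := by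
  have ha' : 0 < a⁻¹ := by positivity
  rcases le_total u 0 with hu | hu
  · rw [abs_of_nonpos hu, show -(1 / 2) * -u = u / 2 by ring, mul_comm]
    have h1 : Real.exp (-(a * Real.exp u)) ≤ 1 := by
      rw [Real.exp_le_one_iff, neg_nonpos]; positivity
    exact mul_le_mul_of_nonneg_right (by linarith) (Real.exp_pos _).le
  · rw [abs_of_nonneg hu]
    have h1 := pow_mul_exp_neg_le 1 ha (Real.exp_pos u).le
    simp only [pow_one, Nat.factorial_one, Nat.cast_one, one_div] at h1
    have h2 : Real.exp (u / 2) = Real.exp u * Real.exp (-(1 / 2) * u) := by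
      rw [← Real.exp_add]; congr 1; ring
    calc _ = (Real.exp u * Real.exp (-(a * Real.exp u))) * Real.exp (-(1 / 2) * u) := by
          rw [h2]; ring
      _ ≤ _ := mul_le_mul_of_nonneg_right (by linarith) (Real.exp_pos _).le

lemma exp_neg_sq_le {b v : ℝ} (hb : 0 < b) :
    Real.exp (-(b * v ^ 2)) ≤ (1 + b⁻¹) * (1 + v ^ 2)⁻¹ := by
  have h1 : 1 + b * v ^ 2 ≤ Real.exp (b * v ^ 2) := by
    have := Real.add_one_le_exp (b * v ^ 2); linarith
  have h2 : 0 ≤ b * v ^ 2 := by positivity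
  rw [Real.exp_neg, ← div_eq_mul_inv, inv_eq_one_div, div_le_div_iff₀ (Real.exp_pos _) (by positivity)]
  have h3 : 1 + v ^ 2 ≤ (1 + b⁻¹) * (1 + b * v ^ 2) := by
    have : b⁻¹ * (b * v ^ 2) = v ^ 2 := by field_simp
    have : 0 < b⁻¹ := by positivity
    nlinarith
  have h4 : (1 + b⁻¹) * (1 + b * v ^ 2) ≤ (1 + b⁻¹) * Real.exp (b * v ^ 2) :=
    mul_le_mul_of_nonneg_left h1 (by positivity)
  linarith

lemma rootGibbs_pos (q : V → ℝ) (x : V) (κ : (V → ℝ) → ℝ) (ε : ℝ) (t s : V → ℝ) :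
    0 < rootGibbs q x κ ε t s := Finset.prod_pos fun _ _ => Real.exp_pos _

/-- Uniform domination of the integrands for `ε ∈ [0, 1]`. The powers of `ε² e^{-t x}` belonging to
trees with several roots are controlled by the pinning at `x`. -/
lemma newInt_bound {G : SimpleGraph V} (hG : G.Connected) {β : V → V → ℝ}
    (hβ : ∀ i j, β i j = β j i) (hβpos : ∀ i j, G.Adj i j → 0 < β i j)
    {x y : V} {pv q : V → ℝ} (hpx : 0 < pv x) (hpy : 0 < pv y) (hq : ∀ i, 0 ≤ q i)
    (hqx : 0 < q x) {κ X : (V → ℝ) → ℝ} (hκ0 : ∀ z, 0 < κ z) (hκ : ExpBdd κ)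
    (hκ' : ExpBdd fun z => (κ z)⁻¹) (hX0 : ∀ t, 0 ≤ X t) (hX1 : ∀ t, X t ≤ 1)
    {T : Finset (Sym2 (Option V))} (hT : T ∈ STrees (aug G)) :
    ∃ C, ∀ ε, 0 ≤ ε → ε ≤ 1 → ∀ p, |newInt G β pv q x y κ X T ε p| ≤ C * dom p := by
  obtain ⟨C1, K, hC1, hK⟩ := (hκ.mul (expBdd_treePart hβ hpx hpy hT (q := q))).mul
    ((ExpBdd.const 1).add ((ExpBdd.const (q x / 2)⁻¹).mul (hκ'.mul hκ')))
  obtain ⟨C2, hC2, hK2⟩ := innerGibbs_decay hβ hβpos hG x (K + 1)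
  set m := (roots T).card - 1
  set C3 : ℝ := m.factorial / (q x / 2) ^ m with hC3
  have hC30 : 0 ≤ C3 := by positivity
  refine ⟨Real.exp (∑ i, q i) * C3 * (1 + (q x / 2)⁻¹) * C1 * C2, fun ε hε0 hε1 p => ?_⟩
  obtain ⟨t, s⟩ := p
  set z := zer x t with hz
  set r := zer x s with hr
  have hzx : z x = 0 := zer_self x t
  have hrx : r x = 0 := zer_self x s
  have hRG := rootGibbs_le (x := x) hq κ hε1 t s
  rw [← hz] at hRG
  have hRG0 := rootGibbs_pos q x κ ε t s
  have hPG0 := innerGibbs_pos G β z r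
  have hκz := hκ0 z
  -- the four one-variable estimates
  have b1 := pow_mul_exp_neg_le m (show 0 < q x / 2 by positivity)
    (show 0 ≤ ε ^ 2 * Real.exp (-t x) by positivity)
  rw [← hC3] at b1
  have b2 := exp_half_mul_le (show 0 < q x / 2 by positivity) (t x)
  have b3 := exp_neg_sq_le (v := s x) (show 0 < q x / 2 * κ z ^ 2 by positivity)
  have b4 := hK z
  have b5 := hK2 z r hzx hrx
  have hS := one_le_expS z
  set E := Real.exp (∑ i, |z i|) with hE
  have hE0 : 0 < E := Real.exp_pos _
  have hprod : 0 < ∏ i, (1 + r i ^ 2) := Finset.prod_pos fun i _ => by positivity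
  have b6 : innerGibbs G β z r * E ^ K ≤ C2 * Real.exp (-(1 / 2) * ∑ i, |z i|) *
      ∏ i, (1 + r i ^ 2)⁻¹ := by
    have h1 : innerGibbs G β z r * E ^ K = (innerGibbs G β z r * (E ^ (K + 1) *
        ∏ i, (1 + r i ^ 2))) * E⁻¹ * ∏ i, (1 + r i ^ 2)⁻¹ := by
      rw [Finset.prod_inv_distrib, pow_succ]
      field_simp
    have h2 : E⁻¹ ≤ Real.exp (-(1 / 2) * ∑ i, |z i|) := by
      rw [hE, ← Real.exp_neg, Real.exp_le_exp]
      have : 0 ≤ ∑ i, |z i| := Finset.sum_nonneg fun _ _ => abs_nonneg _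
      linarith
    rw [h1]
    have h3 : 0 ≤ ∏ i, (1 + r i ^ 2)⁻¹ := Finset.prod_nonneg fun i _ => by positivity
    refine mul_le_mul_of_nonneg_right (mul_le_mul b5 h2 (by positivity) hC2) h3
  have hdom : dom (t, s) = Real.exp (-(1 / 2) * |t x|) * (1 + s x ^ 2)⁻¹ *
      (Real.exp (-(1 / 2) * ∑ i, |z i|) * ∏ i, (1 + r i ^ 2)⁻¹) := by
    have h1 : ∑ i, |z i| = ∑ i ∈ Finset.univ.erase x, |t i| := by
      rw [← Finset.add_sum_erase _ _ (Finset.mem_univ x), hzx, abs_zero, zero_add]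
      exact Finset.sum_congr rfl fun i hi => by rw [hz, zer_ne (Finset.ne_of_mem_erase hi)]
    have h2 : ∏ i, (1 + r i ^ 2)⁻¹ = ∏ i ∈ Finset.univ.erase x, (1 + s i ^ 2)⁻¹ := by
      rw [← Finset.mul_prod_erase _ _ (Finset.mem_univ x), hrx]
      rw [show ((1 : ℝ) + 0 ^ 2)⁻¹ = 1 by norm_num, one_mul]
      exact Finset.prod_congr rfl fun i hi => by
        rw [hr, zer_ne (Finset.ne_of_mem_erase hi)]
    unfold dom
    simp only
    rw [h2, h1, Finset.mul_sum, Real.exp_sum,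
      ← Finset.mul_prod_erase (Finset.univ) (fun i => Real.exp (-(1 / 2) * |t i|))
        (Finset.mem_univ x),
      ← Finset.mul_prod_erase (Finset.univ) (fun i => (1 + s i ^ 2)⁻¹) (Finset.mem_univ x)]
    ring
  have b7 : κ z * |treePart β pv q x y T z| * (1 + (q x / 2 * κ z ^ 2)⁻¹) ≤ C1 * E ^ K := by
    refine le_trans (le_of_eq ?_) b4
    have h1 : (1 + (q x / 2 * κ z ^ 2)⁻¹) = 1 + (q x / 2)⁻¹ * ((κ z)⁻¹ * (κ z)⁻¹) := by
      rw [mul_inv, sq, mul_inv]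
    have h2 : 0 ≤ 1 + (q x / 2)⁻¹ * ((κ z)⁻¹ * (κ z)⁻¹) := by positivity
    rw [h1, abs_mul, abs_mul, abs_of_pos hκz, abs_of_nonneg h2]
  have hind : |(if rootEdge x ∈ T ∧ connIn T x y then 1 else 0 : ℝ)| ≤ 1 := by
    split_ifs <;> simp
  set A := ε ^ 2 * Real.exp (-t x)
  have hA : 0 ≤ A := by positivity
  have hXt : |X t| ≤ 1 := by rw [abs_of_nonneg (hX0 t)]; exact hX1 t
  have hmain : |newInt G β pv q x y κ X T ε (t, s)| ≤ A ^ m * Real.exp (t x / 2) * κ z *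
      |treePart β pv q x y T z| * innerGibbs G β z r * rootGibbs q x κ ε t s := by
    simp only [newInt, abs_mul]
    rw [abs_of_nonneg (pow_nonneg hA m), abs_of_pos (Real.exp_pos _), abs_of_pos hκz,
      abs_of_pos hPG0, abs_of_pos hRG0]
    have hP : 0 ≤ A ^ m * Real.exp (t x / 2) * κ z *
      |treePart β pv q x y T z| * innerGibbs G β z r * rootGibbs q x κ ε t s := by positivity
    calc _ ≤ 1 * (_ * 1) := mul_le_mul hind (mul_le_mul_of_nonneg_left hXt hP)
          (mul_nonneg hP (abs_nonneg _)) zero_le_one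
      _ = _ := by ring
  refine hmain.trans ?_
  calc _ ≤ A ^ m * Real.exp (t x / 2) * κ z * |treePart β pv q x y T z| * innerGibbs G β z r *
        (Real.exp (∑ i, q i) * (Real.exp (-(q x / 2 * Real.exp (t x))) *
          Real.exp (-(q x / 2 * A)) * Real.exp (-(q x / 2 * κ z ^ 2 * s x ^ 2)))) :=
        mul_le_mul_of_nonneg_left hRG (by positivity)
    _ = Real.exp (∑ i, q i) * (A ^ m * Real.exp (-(q x / 2 * A))) *
        (Real.exp (t x / 2) * Real.exp (-(q x / 2 * Real.exp (t x)))) *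
        Real.exp (-(q x / 2 * κ z ^ 2 * s x ^ 2)) *
        (κ z * |treePart β pv q x y T z|) * innerGibbs G β z r := by ring
    _ ≤ Real.exp (∑ i, q i) * C3 * ((1 + (q x / 2)⁻¹) * Real.exp (-(1 / 2) * |t x|)) *
        ((1 + (q x / 2 * κ z ^ 2)⁻¹) * (1 + s x ^ 2)⁻¹) *
        (κ z * |treePart β pv q x y T z|) * innerGibbs G β z r := by gcongr
    _ = Real.exp (∑ i, q i) * C3 * ((1 + (q x / 2)⁻¹) * Real.exp (-(1 / 2) * |t x|)) *
        (1 + s x ^ 2)⁻¹ * innerGibbs G β z r *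
        (κ z * |treePart β pv q x y T z| * (1 + (q x / 2 * κ z ^ 2)⁻¹)) := by ring
    _ ≤ Real.exp (∑ i, q i) * C3 * ((1 + (q x / 2)⁻¹) * Real.exp (-(1 / 2) * |t x|)) *
        (1 + s x ^ 2)⁻¹ * innerGibbs G β z r * (C1 * E ^ K) := by gcongr
    _ = Real.exp (∑ i, q i) * C3 * ((1 + (q x / 2)⁻¹) * Real.exp (-(1 / 2) * |t x|)) *
        (1 + s x ^ 2)⁻¹ * C1 * (innerGibbs G β z r * E ^ K) := by ring
    _ ≤ Real.exp (∑ i, q i) * C3 * ((1 + (q x / 2)⁻¹) * Real.exp (-(1 / 2) * |t x|)) *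
        (1 + s x ^ 2)⁻¹ * C1 * (C2 * Real.exp (-(1 / 2) * ∑ i, |z i|) * ∏ i, (1 + r i ^ 2)⁻¹) :=
        mul_le_mul_of_nonneg_left b6 (by positivity)
    _ = _ := by rw [hdom]; ring


/-! ### Passage to the limit -/

lemma continuous_extV (a : Option V) : Continuous fun t : V → ℝ => extV t a := by
  cases a with
  | none => exact continuous_const
  | some i => exact continuous_apply i

lemma continuous_gibbs (β : V → V → ℝ) (q : V → ℝ) (e : Sym2 (Option V)) :
    Continuous fun p : (V → ℝ) × (V → ℝ) => gibbs β q p.1 p.2 e := by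
  induction e using Sym2.ind with
  | _ a b =>
    have h1 := fun c : Option V =>
      (continuous_extV c).comp (continuous_fst (X := V → ℝ) (Y := V → ℝ))
    have h2 := fun c : Option V =>
      (continuous_extV c).comp (continuous_snd (X := V → ℝ) (Y := V → ℝ))
    have h1a := h1 a; have h1b := h1 b; have h2a := h2 a; have h2b := h2 b
    simp only [Function.comp_def] at h1a h1b h2a h2b
    simp only [gibbs, esym, Sym2.lift_mk, Bfun]
    have hc := Real.continuous_cosh
    fun_prop

lemma continuous_treeW (β : V → V → ℝ) (q : V → ℝ) (e : Sym2 (Option V)) :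
    Continuous fun t : V → ℝ => treeW β q t e := by
  induction e using Sym2.ind with
  | _ a b =>
    have h1a := continuous_extV a; have h1b := continuous_extV b
    simp only [treeW, esym, Sym2.lift_mk]
    fun_prop

lemma measurable_obs (pv : V → ℝ) (x y : V) (T : Finset (Sym2 (Option V))) :
    Measurable fun t : V → ℝ => obs pv x y t T := by
  unfold obs
  fun_prop

lemma measurable_dens (G : SimpleGraph V) (β : V → V → ℝ) (q : V → ℝ)
    (T : Finset (Sym2 (Option V))) :
    Measurable fun p : (V → ℝ) × (V → ℝ) => dens G β q p.1 p.2 T := by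
  unfold dens
  refine ((Finset.measurable_prod _ fun j _ => ?_).mul
    (Finset.measurable_prod _ fun e _ => (continuous_gibbs β q e).measurable)).mul
    (Finset.measurable_prod _ fun e _ => ((continuous_treeW β q e).measurable.comp measurable_fst))
  fun_prop

lemma measurable_treePart (β : V → V → ℝ) (pv q : V → ℝ) (x y : V)
    (T : Finset (Sym2 (Option V))) : Measurable (treePart β pv q x y T) := by
  unfold treePart
  refine (((Finset.measurable_prod _ fun j _ => ?_).mul
    (Finset.measurable_prod _ fun e _ => (continuous_treeW β 0 e).measurable)).mul
    (Finset.measurable_prod _ fun e _ => ?_)).mul ?_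
  all_goals fun_prop

lemma measurable_newInt (G : SimpleGraph V) (β : V → V → ℝ) (pv q : V → ℝ) (x y : V)
    {κ X : (V → ℝ) → ℝ} (hκ : Measurable κ) (hX : Measurable X) (T : Finset (Sym2 (Option V)))
    (ε : ℝ) : Measurable (newInt G β pv q x y κ X T ε) := by
  have hz : Measurable (zer x) := (continuous_zer x).measurable
  have hzi : ∀ i, Measurable fun t => zer x t i := fun i => (measurable_pi_apply i).comp hz
  have h1 : Measurable fun p : (V → ℝ) × (V → ℝ) => innerGibbs G β (zer x p.1) (zer x p.2) := by
    have hzz : Measurable fun p : (V → ℝ) × (V → ℝ) => (zer x p.1, zer x p.2) :=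
      (hz.comp measurable_fst).prodMk (hz.comp measurable_snd)
    have hi : Measurable fun p : (V → ℝ) × (V → ℝ) => innerGibbs G β p.1 p.2 := by
      unfold innerGibbs
      exact Finset.measurable_prod _ fun e _ => (continuous_gibbs β 0 e).measurable
    have h := hi.comp hzz
    simpa only [Function.comp_def] using h
  have h2 : Measurable fun p : (V → ℝ) × (V → ℝ) => rootGibbs q x κ ε p.1 p.2 := by
    unfold rootGibbs
    refine Finset.measurable_prod _ fun i _ => ?_
    have h3 : Measurable fun p : (V → ℝ) × (V → ℝ) => κ (zer x p.1) :=
      hκ.comp (hz.comp measurable_fst)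
    have h4 : Measurable fun p : (V → ℝ) × (V → ℝ) => zer x p.1 i := (hzi i).comp measurable_fst
    have h5 : Measurable fun p : (V → ℝ) × (V → ℝ) => zer x p.2 i := (hzi i).comp measurable_snd
    fun_prop
  have h3 : Measurable fun p : (V → ℝ) × (V → ℝ) => treePart β pv q x y T (zer x p.1) :=
    (measurable_treePart β pv q x y T).comp (hz.comp measurable_fst)
  have h4 : Measurable fun p : (V → ℝ) × (V → ℝ) => κ (zer x p.1) :=
    hκ.comp (hz.comp measurable_fst)
  have h5 : Measurable fun p : (V → ℝ) × (V → ℝ) =>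
      (ε ^ 2 * Real.exp (-p.1 x)) ^ ((roots T).card - 1) * Real.exp (p.1 x / 2) := by
    fun_prop
  exact ((((((h5.mul h4).mul h3).mul h1).mul h2).mul (hX.comp measurable_fst)).const_mul _)

lemma continuous_newInt (G : SimpleGraph V) (β : V → V → ℝ) (pv q : V → ℝ) (x y : V)
    (κ X : (V → ℝ) → ℝ) (T : Finset (Sym2 (Option V))) (p : (V → ℝ) × (V → ℝ)) :
    Continuous fun ε => newInt G β pv q x y κ X T ε p := by
  unfold newInt rootGibbs
  fun_prop

section
variable {G : SimpleGraph V} (hG : G.Connected) {β : V → V → ℝ}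
  (hβ : ∀ i j, β i j = β j i) (hβpos : ∀ i j, G.Adj i j → 0 < β i j)
  {x y : V} {pv q : V → ℝ} (hpx : 0 < pv x) (hpy : 0 < pv y) (hq : ∀ i, 0 ≤ q i)
  (hqx : 0 < q x) {κ X : (V → ℝ) → ℝ} (hκ0 : ∀ z, 0 < κ z) (hκ : ExpBdd κ)
  (hκ' : ExpBdd fun z => (κ z)⁻¹) (hκm : Measurable κ) (hX0 : ∀ t, 0 ≤ X t)
  (hX1 : ∀ t, X t ≤ 1) (hXm : Measurable X)
include hG hβ hβpos hpx hpy hq hqx hκ0 hκ hκ' hκm hX0 hX1 hXm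

lemma integrable_newInt {T : Finset (Sym2 (Option V))} (hT : T ∈ STrees (aug G)) :
    Integrable (newInt G β pv q x y κ X T 0) := by
  obtain ⟨C, hC⟩ := newInt_bound hG hβ hβpos hpx hpy hq hqx hκ0 hκ hκ' hX0 hX1 hT
  exact (integrable_dom.const_mul C).mono'
    (measurable_newInt G β pv q x y hκm hXm T 0).aestronglyMeasurable
    (Filter.Eventually.of_forall fun p => hC 0 le_rfl zero_le_one p)

/-- The limit of an expectation as the pinning `ε q` tends to `0`, for an observable which in the
new variables does not depend on `ε`. -/
lemma tendsto_expect (g : ℝ → (V → ℝ) → ℝ) (hgm : ∀ ε, Measurable (g ε))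
    (hg : ∀ ε, 0 < ε → ∀ t, g ε (fun i => shear x t i + -Real.log ε) = X t) :
    Tendsto (fun ε : ℝ => expect G β (fun i => q i * ε) (fun t _ T => obs pv x y t T * g ε t))
      (𝓝[>] (0 : ℝ)) (𝓝 (∑ T ∈ STrees (aug G), ∫ p, newInt G β pv q x y κ X T 0 p)) := by
  unfold expect
  refine tendsto_finsetSum _ fun T hT => ?_
  obtain ⟨C, hC⟩ := newInt_bound hG hβ hβpos hpx hpy hq hqx hκ0 hκ hκ' hX0 hX1 hT
  have hev : ∀ᶠ ε : ℝ in 𝓝[>] (0 : ℝ), ∫ p, newInt G β pv q x y κ X T ε p =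
      ∫ p : (V → ℝ) × (V → ℝ), dens G β (fun i => q i * ε) p.1 p.2 T *
        (obs pv x y p.1 T * g ε p.1) := by
    filter_upwards [self_mem_nhdsWithin] with ε hε
    have hε : 0 < ε := hε
    have hz : Measurable (zer x) := (continuous_zer x).measurable
    have hκz : Measurable fun t : V → ℝ => κ (zer x t) := hκm.comp hz
    have ho := measurable_obs pv x y T
    have hgε := hgm ε
    have hd := measurable_dens G β (fun i => q i * ε) T
    rw [integral_cov x (-Real.log ε) (c := fun t => κ (zer x t) * Real.exp (-t x / 2))
      (b := fun t => ε * Real.exp (-t x)) (by fun_prop) (by fun_prop)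
      (fun t => mul_pos (hκ0 _) (Real.exp_pos _)) (fun t => mul_pos hε (Real.exp_pos _))
      (fun p => dens G β (fun i => q i * ε) p.1 p.2 T * (obs pv x y p.1 T * g ε p.1))
      (by fun_prop)]
    exact integral_congr_ae (Filter.Eventually.of_forall fun p =>
      (newInt_eq hβ hpx hpy κ X hT hε (g ε) (hg ε hε) p).symm)
  refine Tendsto.congr' hev ?_
  refine tendsto_integral_filter_of_dominated_convergence (fun p => C * dom p) ?_ ?_
    (integrable_dom.const_mul C) ?_
  · exact Filter.Eventually.of_forall fun ε =>
      (measurable_newInt G β pv q x y hκm hXm T ε).aestronglyMeasurable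
  · filter_upwards [self_mem_nhdsWithin, mem_nhdsWithin_of_mem_nhds (Iic_mem_nhds zero_lt_one)]
      with ε hε hε1
    exact Filter.Eventually.of_forall fun p => hC ε (le_of_lt hε) hε1 p
  · exact Filter.Eventually.of_forall fun p =>
      ((continuous_newInt G β pv q x y κ X T p).tendsto 0).mono_left nhdsWithin_le_nhds

end

/-! ### Comparison of the limits -/

/-- The total pinning `∑ i, q i e^{z i}`. -/
noncomputable def pinSum (q z : V → ℝ) : ℝ := ∑ i, q i * Real.exp (z i)

lemma le_pinSum {q : V → ℝ} (hq : ∀ i, 0 ≤ q i) (x : V) (z : V → ℝ) :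
    q x * Real.exp (z x) ≤ pinSum q z :=
  Finset.single_le_sum (f := fun i => q i * Real.exp (z i))
    (fun i _ => mul_nonneg (hq i) (Real.exp_pos _).le) (Finset.mem_univ x)

lemma pinSum_pos {q : V → ℝ} (hq : ∀ i, 0 ≤ q i) {x : V} (hqx : 0 < q x) (z : V → ℝ) :
    0 < pinSum q z :=
  (mul_pos hqx (Real.exp_pos _)).trans_le (le_pinSum hq x z)

lemma measurable_pinSum (q : V → ℝ) : Measurable (pinSum q) := by
  unfold pinSum
  fun_prop

lemma expBdd_pinSum (q : V → ℝ) : ExpBdd (pinSum q) := by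
  unfold pinSum
  induction (Finset.univ : Finset V) using Finset.induction_on with
  | empty => simpa using ExpBdd.const 0
  | insert a s ha ih =>
    simp only [Finset.sum_insert ha]
    exact ((ExpBdd.const _).mul (expBdd_exp a)).add ih

lemma sqrt_le_one_add {a : ℝ} (ha : 0 ≤ a) : Real.sqrt a ≤ 1 + a := by
  rw [Real.sqrt_le_left (by positivity)]
  nlinarith

lemma expBdd_sqrt_pinSum {q : V → ℝ} (hq : ∀ i, 0 ≤ q i) :
    ExpBdd fun z => Real.sqrt (pinSum q z) := by
  refine ((ExpBdd.const 1).add (expBdd_pinSum q)).mono fun z => ?_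
  have h : 0 ≤ pinSum q z :=
    Finset.sum_nonneg fun i _ => mul_nonneg (hq i) (Real.exp_pos _).le
  rw [abs_of_nonneg (Real.sqrt_nonneg _), abs_of_nonneg (by positivity)]
  exact sqrt_le_one_add h

lemma expBdd_inv_sqrt_pinSum {q : V → ℝ} (hq : ∀ i, 0 ≤ q i) {x : V} (hqx : 0 < q x) :
    ExpBdd fun z => (Real.sqrt (pinSum q z))⁻¹ := by
  refine ((ExpBdd.const 1).add ((ExpBdd.const (q x)⁻¹).mul (expBdd_exp_neg x))).mono fun z => ?_
  have h := pinSum_pos hq hqx z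
  rw [abs_of_nonneg (by positivity), abs_of_nonneg (by positivity), ← Real.sqrt_inv]
  refine (sqrt_le_one_add (by positivity)).trans (add_le_add le_rfl ?_)
  rw [Real.exp_neg, ← mul_inv]
  exact inv_anti₀ (by positivity) (le_pinSum hq x z)

lemma pinSum_singlePin (x : V) (c : ℝ) {z : V → ℝ} (hz : z x = 0) :
    pinSum (singlePin x c) z = c := by
  simp [pinSum, singlePin, hz]

/-- At `ε = 0` the root factors split into a function of `t x` and a Gaussian in `s x`, for given
`zer x t`. -/
lemma rootGibbs_zero (q : V → ℝ) (x : V) (κ : (V → ℝ) → ℝ) (t s : V → ℝ) :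
    rootGibbs q x κ 0 t s = Real.exp (-((1 / 2) * Real.exp (t x) * pinSum q (zer x t))) *
      Real.exp (-((1 / 2) * (κ (zer x t) ^ 2 * pinSum q (zer x t)) * s x ^ 2)) := by
  unfold rootGibbs pinSum
  rw [← Real.exp_sum, ← Real.exp_add, Finset.mul_sum, Finset.mul_sum, Finset.mul_sum,
    Finset.sum_mul, ← Finset.sum_neg_distrib, ← Finset.sum_neg_distrib, ← Finset.sum_add_distrib]
  congr 1
  refine Finset.sum_congr rfl fun i _ => ?_
  have h : Real.exp (-t x / 2) ^ 2 * Real.exp (t x) = 1 := by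
    rw [← exp_half_sq, ← Real.exp_add]; simp
  rw [Real.exp_add]
  linear_combination (-(1 / 2) * q i * κ (zer x t) ^ 2 * s x ^ 2 * Real.exp (zer x t i)) * h

/-- The observable comparing the pinnings `π ε` and `ε_x δ_x`, in the new variables. -/
noncomputable def cmp (pv : V → ℝ) (x : V) (t : V → ℝ) : ℝ :=
  Real.sqrt (pv x / pinSum pv (zer x t)) *
    ∏ i ∈ Finset.univ.erase x, Real.exp (-(1 / 2) * pv i * Real.exp (t x + zer x t i))

lemma cmp_nonneg (pv : V → ℝ) (x : V) (t : V → ℝ) : 0 ≤ cmp pv x t :=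
  mul_nonneg (Real.sqrt_nonneg _) (Finset.prod_nonneg fun _ _ => (Real.exp_pos _).le)

lemma cmp_le_one {pv : V → ℝ} (hpv : ∀ i, 0 ≤ pv i) {x : V} (hpx : 0 < pv x) (t : V → ℝ) :
    cmp pv x t ≤ 1 := by
  refine mul_le_one₀ ?_ (Finset.prod_nonneg fun _ _ => (Real.exp_pos _).le)
    (Finset.prod_le_one (fun _ _ => (Real.exp_pos _).le) fun i _ => ?_)
  · rw [Real.sqrt_le_one, div_le_one (pinSum_pos hpv hpx _)]
    simpa using le_pinSum hpv x (zer x t)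
  · rw [Real.exp_le_one_iff]
    have := mul_nonneg (hpv i) (Real.exp_pos (t x + zer x t i)).le
    linarith

lemma measurable_cmp (pv : V → ℝ) (x : V) : Measurable (cmp pv x) := by
  have hz : Measurable (zer x) := (continuous_zer x).measurable
  have hzi : ∀ i, Measurable fun t => zer x t i := fun i => (measurable_pi_apply i).comp hz
  have h1 : Measurable fun t => pinSum pv (zer x t) := (measurable_pinSum pv).comp hz
  unfold cmp
  fun_prop

lemma cmp_eq (pv : V → ℝ) (x : V) {ε : ℝ} (hε : 0 < ε) (t : V → ℝ) :
    Real.sqrt (pv x * Real.exp (shear x t x + -Real.log ε) /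
      ∑ i, pv i * Real.exp (shear x t i + -Real.log ε)) *
      ∏ i ∈ Finset.univ.erase x,
        Real.exp (-(1 / 2) * ε * pv i * Real.exp (shear x t i + -Real.log ε)) = cmp pv x t := by
  have hexp : ∀ i, Real.exp (shear x t i + -Real.log ε) =
      (Real.exp (t x) * ε⁻¹) * Real.exp (zer x t i) := by
    intro i
    rw [shear, Real.exp_add, Real.exp_add, Real.exp_neg, Real.exp_log hε]
    ring
  have hc : Real.exp (t x) * ε⁻¹ ≠ 0 := by positivity
  unfold cmp pinSum
  congr 1
  · congr 1
    simp only [hexp, zer_self, Real.exp_zero, mul_left_comm _ (Real.exp (t x) * ε⁻¹) _]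
    rw [← Finset.mul_sum, mul_div_mul_left _ _ hc, mul_one]
  · refine Finset.prod_congr rfl fun i _ => ?_
    rw [hexp, Real.exp_add]
    congr 1
    field_simp

/-- At `ε = 0` the integrands for the pinnings `π ε` and `ε_x δ_x` agree: only trees with the single
root `x` contribute, and the scales `κ` of the variable `s x` have been chosen such that the Gaussian
factor in `s x` is the standard one in both cases. -/
lemma newInt_zero_eq (G : SimpleGraph V) (β : V → V → ℝ) {pv : V → ℝ} (hpv : ∀ i, 0 ≤ pv i)
    {x : V} (y : V) (hpx : 0 < pv x) (T : Finset (Sym2 (Option V)))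
    (p : (V → ℝ) × (V → ℝ)) :
    newInt G β pv pv x y (fun z => (Real.sqrt (pinSum pv z))⁻¹) (fun _ => 1) T 0 p =
      newInt G β pv (singlePin x (pv x)) x y (fun _ => (Real.sqrt (pv x))⁻¹) (cmp pv x) T 0 p := by
  obtain ⟨t, s⟩ := p
  unfold newInt
  by_cases hind : rootEdge x ∈ T ∧ connIn T x y
  swap
  · simp [hind]
  have hx : x ∈ roots T := by simp [roots, hind.1]
  by_cases hcard : (roots T).card - 1 = 0
  swap
  · simp [hcard]
  have hr : roots T = {x} := by
    have h1 := Finset.card_pos.2 ⟨x, hx⟩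
    obtain ⟨a, ha⟩ := Finset.card_eq_one.1 (show (roots T).card = 1 by omega)
    rw [ha] at hx ⊢
    rw [Finset.mem_singleton.1 hx]
  have htree : treePart β pv (singlePin x (pv x)) x y T (zer x t) =
      treePart β pv pv x y T (zer x t) := by
    simp only [treePart, hr, Finset.prod_singleton, singlePin, if_true]
  rw [htree, rootGibbs_zero, rootGibbs_zero, pinSum_singlePin x _ (zer_self x t)]
  simp only
  have hS := pinSum_pos hpv hpx (zer x t)
  have h1 : (Real.sqrt (pinSum pv (zer x t)))⁻¹ ^ 2 * pinSum pv (zer x t) = 1 := by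
    rw [inv_pow, Real.sq_sqrt hS.le, inv_mul_cancel₀ hS.ne']
  have h2 : (Real.sqrt (pv x))⁻¹ ^ 2 * pv x = 1 := by
    rw [inv_pow, Real.sq_sqrt hpx.le, inv_mul_cancel₀ hpx.ne']
  have h3 : (Real.sqrt (pv x))⁻¹ * Real.sqrt (pv x / pinSum pv (zer x t)) =
      (Real.sqrt (pinSum pv (zer x t)))⁻¹ := by
    have := Real.sqrt_pos.2 hpx
    rw [Real.sqrt_div hpx.le]
    field_simp
  have h4 : Real.exp (-((1 / 2) * Real.exp (t x) * pinSum pv (zer x t))) =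
      Real.exp (-((1 / 2) * Real.exp (t x) * pv x)) *
      ∏ i ∈ Finset.univ.erase x, Real.exp (-(1 / 2) * pv i * Real.exp (t x + zer x t i)) := by
    rw [← Real.exp_sum, ← Real.exp_add]
    congr 1
    unfold pinSum
    rw [← Finset.add_sum_erase _ _ (Finset.mem_univ x), zer_self, Real.exp_zero, mul_one, mul_add,
      Finset.mul_sum, neg_add, ← Finset.sum_neg_distrib]
    congr 1
    exact Finset.sum_congr rfl fun i _ => by rw [Real.exp_add]; ring
  rw [h1, h2, h4, ← h3]
  unfold cmp
  ring

lemma treePart_pos {G : SimpleGraph V} {β : V → V → ℝ} (hβ : ∀ i j, β i j = β j i)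
    (hβpos : ∀ i j, G.Adj i j → 0 < β i j) {x y : V} {pv q : V → ℝ} (hpx : 0 < pv x)
    (hpy : 0 < pv y) {T : Finset (Sym2 (Option V))} (hT : T ∈ STrees (aug G))
    (hq : ∀ i ∈ roots T, 0 < q i) (z : V → ℝ) : 0 < treePart β pv q x y T z := by
  unfold treePart
  have h1 : 0 < ∏ e ∈ forestOf T, treeW β 0 z e := Finset.prod_pos fun e he => by
    obtain ⟨i, j, hij, rfl⟩ := exists_of_mem_forestOf (sub_of_mem_STrees hT) he
    rw [treeW_some hβ]
    exact mul_pos (hβpos i j hij) (Real.exp_pos _)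
  have h2 : 0 < ∏ i ∈ roots T, q i * Real.exp (z i) :=
    Finset.prod_pos fun i hi => mul_pos (hq i hi) (Real.exp_pos _)
  have h3 : 0 < ∏ j, Real.exp (-z j) / (2 * Real.pi) := Finset.prod_pos fun j _ => by positivity
  positivity

lemma treePart_nonneg {G : SimpleGraph V} {β : V → V → ℝ} (hβ : ∀ i j, β i j = β j i)
    (hβpos : ∀ i j, G.Adj i j → 0 < β i j) {x y : V} {pv q : V → ℝ} (hpx : 0 < pv x)
    (hpy : 0 < pv y) {T : Finset (Sym2 (Option V))} (hT : T ∈ STrees (aug G))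
    (hq : ∀ i, 0 ≤ q i) (z : V → ℝ) : 0 ≤ treePart β pv q x y T z := by
  by_cases h : ∀ i ∈ roots T, 0 < q i
  · exact (treePart_pos hβ hβpos hpx hpy hT h z).le
  · push Not at h
    obtain ⟨i, hi, hqi⟩ := h
    have h0 : ∏ i ∈ roots T, q i * Real.exp (z i) = 0 :=
      Finset.prod_eq_zero hi (by rw [le_antisymm hqi (hq i), zero_mul])
    simp [treePart, h0]

lemma newInt_nonneg {G : SimpleGraph V} {β : V → V → ℝ} (hβ : ∀ i j, β i j = β j i)
    (hβpos : ∀ i j, G.Adj i j → 0 < β i j) {x y : V} {pv q : V → ℝ} (hpx : 0 < pv x)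
    (hpy : 0 < pv y) {κ X : (V → ℝ) → ℝ} (hκ0 : ∀ z, 0 < κ z) (hX0 : ∀ t, 0 ≤ X t)
    {T : Finset (Sym2 (Option V))} (hT : T ∈ STrees (aug G))
    (hq : ∀ i, 0 ≤ q i) (ε : ℝ) (p : (V → ℝ) × (V → ℝ)) :
    0 ≤ newInt G β pv q x y κ X T ε p := by
  have h1 := treePart_nonneg hβ hβpos hpx hpy hT hq (zer x p.1)
  have h2 := innerGibbs_pos G β (zer x p.1) (zer x p.2)
  have h3 := rootGibbs_pos q x κ ε p.1 p.2
  have h4 := hκ0 (zer x p.1)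
  have h5 := hX0 p.1
  unfold newInt
  refine mul_nonneg (by split_ifs <;> norm_num) (by positivity)

lemma newInt_mono {G : SimpleGraph V} {β : V → V → ℝ} (hβ : ∀ i j, β i j = β j i)
    (hβpos : ∀ i j, G.Adj i j → 0 < β i j) {x y : V} {pv q : V → ℝ} (hpx : 0 < pv x)
    (hpy : 0 < pv y) {κ X : (V → ℝ) → ℝ} (hκ0 : ∀ z, 0 < κ z) (hX1 : ∀ t, X t ≤ 1)
    {T : Finset (Sym2 (Option V))} (hT : T ∈ STrees (aug G))
    (hq : ∀ i, 0 ≤ q i) (ε : ℝ) (p : (V → ℝ) × (V → ℝ)) :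
    newInt G β pv q x y κ X T ε p ≤ newInt G β pv q x y κ (fun _ => 1) T ε p := by
  have h : newInt G β pv q x y κ X T ε p =
      newInt G β pv q x y κ (fun _ => 1) T ε p * X p.1 := by
    unfold newInt; ring
  rw [h]
  exact mul_le_of_le_one_right
    (newInt_nonneg hβ hβpos hpx hpy hκ0 (fun _ => zero_le_one) hT hq ε p) (hX1 p.1)

/-- The limit is positive: the integrand of a tree whose only root is `x` is positive everywhere. -/
lemma sum_integral_newInt_pos {G : SimpleGraph V} (hG : G.Connected) {β : V → V → ℝ}
    (hβ : ∀ i j, β i j = β j i) (hβpos : ∀ i j, G.Adj i j → 0 < β i j) {x y : V}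
    {pv q : V → ℝ} (hpx : 0 < pv x) (hpy : 0 < pv y) {κ X : (V → ℝ) → ℝ} (hκ0 : ∀ z, 0 < κ z)
    (hX0 : ∀ t, 0 < X t) (hq : ∀ i, 0 ≤ q i) (hqx : 0 < q x)
    (hInt : ∀ T ∈ STrees (aug G), Integrable (newInt G β pv q x y κ X T 0)) :
    0 < ∑ T ∈ STrees (aug G), ∫ p, newInt G β pv q x y κ X T 0 p := by
  obtain ⟨T, hT, hr, hc⟩ := exists_tree hG x y
  have hnn := fun {T} (hT : T ∈ STrees (aug G)) => newInt_nonneg hβ hβpos hpx hpy hκ0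
    (fun t => (hX0 t).le) hT hq 0
  refine Finset.sum_pos' (fun T hT => integral_nonneg (hnn hT)) ⟨T, hT, ?_⟩
  have hx : rootEdge x ∈ T := by
    have : x ∈ roots T := by simp [hr]
    simpa [roots] using this
  have hpos : ∀ p, 0 < newInt G β pv q x y κ X T 0 p := fun p => by
    have h1 := treePart_pos hβ hβpos hpx hpy hT (q := q) (by simpa [hr] using hqx) (zer x p.1)
    have h2 := innerGibbs_pos G β (zer x p.1) (zer x p.2)
    have h3 := rootGibbs_pos q x κ 0 p.1 p.2
    have h4 := hκ0 (zer x p.1)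
    have h5 := hX0 p.1
    unfold newInt
    rw [if_pos ⟨hx, hc⟩, hr, Finset.card_singleton, Nat.sub_self, pow_zero]
    positivity
  rw [integral_pos_iff_support_of_nonneg (hnn hT) (hInt T hT),
    Set.eq_univ_of_forall fun p => Function.mem_support.2 (hpos p).ne']
  exact Measure.measure_univ_pos.2 (NeZero.ne _)

end

/-- with pinning `ε = (π_i ε)_{i∈V}`, the limits as `ε ↓ 0` of
`E_{μ^ε}[O^π_{xy}]`,
`E_{μ^{ε_xδ_x}}[O^π_{xy} √(π_x e^{t_x}/Σ_i π_i e^{t_i}) Π_{i≠x} e^{−½επ_i e^{t_i}}]` and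
`E_{μ^{ε_xδ_x}}[O^π_{xy}]` all exist (the last one being finite, as a real number) and
satisfy `0 < L₁ = L₂ ≤ L₃`. -/
theorem stmt_19 {V : Type*} [Fintype V] [DecidableEq V]
    (G : SimpleGraph V) (hG : G.Connected)
    (β : V → V → ℝ) (hβsymm : ∀ i j, β i j = β j i)
    (hβpos : ∀ i j, G.Adj i j → 0 < β i j)
    (x y : V) (hxy : x ≠ y)
    (pv : V → ℝ) (hpv : ∀ i, 0 ≤ pv i) (hpx : 0 < pv x) (hpy : 0 < pv y) :
    ∃ L₁ L₂ L₃ : ℝ,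
      Filter.Tendsto
        (fun ε : ℝ => expect G β (pinOf pv ε) (fun t _ T => obs pv x y t T))
        (𝓝[>] (0 : ℝ)) (𝓝 L₁) ∧
      Filter.Tendsto
        (fun ε : ℝ => expect G β (singlePin x (pv x * ε))
          (fun t _ T => obs pv x y t T *
            Real.sqrt (pv x * Real.exp (t x) / ∑ i, pv i * Real.exp (t i)) *
            ∏ i ∈ Finset.univ.erase x, Real.exp (-(1 / 2) * ε * pv i * Real.exp (t i))))
        (𝓝[>] (0 : ℝ)) (𝓝 L₂) ∧
      Filter.Tendsto
        (fun ε : ℝ => expect G β (singlePin x (pv x * ε)) (fun t _ T => obs pv x y t T))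
        (𝓝[>] (0 : ℝ)) (𝓝 L₃) ∧
      0 < L₁ ∧ L₁ = L₂ ∧ L₂ ≤ L₃ := by
  have hq2 : ∀ i, 0 ≤ singlePin x (pv x) i := fun i => by
    unfold singlePin; split_ifs; exacts [hpx.le, le_rfl]
  have hqx2 : 0 < singlePin x (pv x) x := by simpa [singlePin] using hpx
  have hpin : ∀ ε : ℝ, singlePin x (pv x * ε) = fun i => singlePin x (pv x) i * ε := fun ε => by
    ext i; unfold singlePin; split_ifs <;> simp
  have hκ1 : ∀ z, 0 < (Real.sqrt (pinSum pv z))⁻¹ := fun z =>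
    inv_pos.2 (Real.sqrt_pos.2 (pinSum_pos hpv hpx z))
  have hκ1' : ExpBdd fun z => ((Real.sqrt (pinSum pv z))⁻¹)⁻¹ := by
    simpa only [inv_inv] using expBdd_sqrt_pinSum hpv
  have hκ1m : Measurable fun z => (Real.sqrt (pinSum pv z))⁻¹ :=
    (measurable_pinSum pv).sqrt.inv
  have hκ2 : ∀ _ : V → ℝ, 0 < (Real.sqrt (pv x))⁻¹ := fun _ => inv_pos.2 (Real.sqrt_pos.2 hpx)
  have t1 := tendsto_expect hG hβsymm hβpos hpx hpy hpv hpx hκ1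
    (expBdd_inv_sqrt_pinSum hpv hpx) hκ1' hκ1m (X := fun _ => 1) (fun _ => zero_le_one)
    (fun _ => le_rfl) measurable_const (fun _ _ => 1) (fun _ => measurable_const)
    (fun _ _ _ => rfl)
  have t2 := tendsto_expect hG hβsymm hβpos hpx hpy hq2 hqx2 hκ2 (ExpBdd.const _) (ExpBdd.const _)
    measurable_const (X := cmp pv x) (cmp_nonneg pv x) (cmp_le_one hpv hpx) (measurable_cmp pv x)
    (fun ε t => Real.sqrt (pv x * Real.exp (t x) / ∑ i, pv i * Real.exp (t i)) *
      ∏ i ∈ Finset.univ.erase x, Real.exp (-(1 / 2) * ε * pv i * Real.exp (t i)))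
    (fun ε => by fun_prop) (fun ε hε t => cmp_eq pv x hε t)
  have t3 := tendsto_expect hG hβsymm hβpos hpx hpy hq2 hqx2 hκ2 (ExpBdd.const _) (ExpBdd.const _)
    measurable_const (X := fun _ => 1) (fun _ => zero_le_one) (fun _ => le_rfl) measurable_const
    (fun _ _ => 1) (fun _ => measurable_const) (fun _ _ _ => rfl)
  simp only [mul_one] at t1 t3
  simp only [← hpin, ← mul_assoc] at t2 t3
  refine ⟨_, _, _, t1, t2, t3, ?_, ?_, ?_⟩
  · exact sum_integral_newInt_pos hG hβsymm hβpos hpx hpy hκ1 (fun _ => one_pos) hpv hpx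
      fun T hT => integrable_newInt hG hβsymm hβpos hpx hpy hpv hpx hκ1
        (expBdd_inv_sqrt_pinSum hpv hpx) hκ1' hκ1m (fun _ => zero_le_one) (fun _ => le_rfl)
        measurable_const hT
  · exact Finset.sum_congr rfl fun T _ =>
      integral_congr_ae (Filter.Eventually.of_forall fun p => newInt_zero_eq G β hpv y hpx T p)
  · refine Finset.sum_le_sum fun T hT => integral_mono ?_ ?_ fun p =>
      newInt_mono hβsymm hβpos hpx hpy hκ2 (cmp_le_one hpv hpx) hT hq2 0 p
    · exact integrable_newInt hG hβsymm hβpos hpx hpy hq2 hqx2 hκ2 (ExpBdd.const _)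
        (ExpBdd.const _) measurable_const (cmp_nonneg pv x) (cmp_le_one hpv hpx)
        (measurable_cmp pv x) hT
    · exact integrable_newInt hG hβsymm hβpos hpx hpy hq2 hqx2 hκ2 (ExpBdd.const _)
        (ExpBdd.const _) measurable_const (fun _ => zero_le_one) (fun _ => le_rfl)
        measurable_const hT

end H22
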